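/- arXiv:2406.00331 — 2 statements merged into one kernel-verified Lean document; each statement's English description precedes it below -/
import Mathlib

section
/- Fix a positive integer k. The sum Σ_{n ≥ -k} ℓ_{n,k}² is finite if and only if the integral (1/2π) ∫_{-∞}^{∞} |ζ(1/2 + it)|^{2k} / (1/4 + t²) dt is finite, and in that case the two quantities are equal. -/
open scoped Real Topology
open Complex Filter MeasureTheory Finset Asymptotics

/-- The analytic extension of `s ↦ ((s-1) * ζ(s))^k` to `s = 1` (where its value is `1`). -/
noncomputable def zetaPowAux (k : ℕ) : ℂ → ℂ :=
  Function.update (fun s : ℂ => ((s - 1) * riemannZeta s) ^ k) 1 1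

/-- `lam k j` is the Taylor coefficient `λ_{j,k}`, i.e. the `j`-th derivative at `s = 1` of the
analytic extension of `(s-1)^k ζ(s)^k`; these numbers are real, and we record their real part. -/
noncomputable def lam (k j : ℕ) : ℝ :=
  (iteratedDeriv j (zetaPowAux k) 1).re

/-- The Fourier coefficients `ℓ_{n,k}` for `n ≥ -k` (an integer index). -/
noncomputable def ell (k : ℕ) (n : ℤ) : ℝ :=
  if 1 ≤ n then
    (-1 : ℝ) ^ n.toNat *
      ∑ j ∈ Finset.Icc 1 n.toNat,
        ((n.toNat - 1).choose (j - 1) : ℝ) * lam k (j + k) / (Nat.factorial (j + k))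
  else
    (-1 : ℝ) ^ k *
      ∑ j ∈ Finset.range ((k + n).toNat + 1),
        ((k - j).choose (-n).toNat : ℝ) * (-1 : ℝ) ^ j * lam k j / (Nat.factorial j)

/-- The Lindelöf Hypothesis: `ζ(1/2 + it) = O(|t|^ε)` for every `ε > 0`. -/
def LindelofHypothesis : Prop :=
  ∀ ε : ℝ, 0 < ε → ∃ C : ℝ, ∀ t : ℝ, 1 ≤ |t| →
    ‖riemannZeta (1 / 2 + t * Complex.I)‖ ≤ C * |t| ^ ε

/-- `dk k n` is the Piltz divisor function `d_k(n)`: the number of representations of `n` as an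
ordered product of `k` positive integers (the `k`-th Dirichlet-convolution power of `ζ`). -/
noncomputable def dk (k n : ℕ) : ℕ := (ArithmeticFunction.zeta ^ k) n

/-- The coefficients `a_{j,k}` of the polynomial `P_k`. -/
noncomputable def aCoef (k j : ℕ) : ℝ :=
  (-1 : ℝ) ^ (k - 1 - j) *
    ∑ i ∈ Finset.range (k - 1 - j + 1), (-1 : ℝ) ^ i * lam k i / (Nat.factorial i)

/-- The error term `Δ_k(x) = (Σ_{1 ≤ n ≤ x} d_k(n)) - x P_k(log x)` in the Piltz divisor
problem. -/
noncomputable def Deltak (k : ℕ) (x : ℝ) : ℝ :=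
  (∑ n ∈ Finset.Icc 1 ⌊x⌋₊, (dk k n : ℝ)) -
    x * ∑ j ∈ Finset.range k, aCoef k j / (Nat.factorial j) * (Real.log x) ^ j

/-- The `n`-th Laguerre polynomial. -/
noncomputable def laguerre (n : ℕ) (u : ℝ) : ℝ :=
  ∑ j ∈ Finset.range (n + 1), (n.choose j : ℝ) * (-1 : ℝ) ^ j * u ^ j / (Nat.factorial j)

/-- The Bessel function of the first kind of order `0`. -/
noncomputable def besselJ0 (u : ℝ) : ℝ :=
  ∑' m : ℕ, (-1 : ℝ) ^ m * (u / 2) ^ (2 * m) / ((Nat.factorial m : ℝ) ^ 2)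

/-- `φ_k(x) = ∫_1^∞ Δ_k(r) J₀(2 √(x log r)) r⁻² dr`. -/
noncomputable def phik (k : ℕ) (x : ℝ) : ℝ :=
  ∫ r in Set.Ioi (1 : ℝ), Deltak k r * besselJ0 (2 * Real.sqrt (x * Real.log r)) / r ^ 2

/-!
The map `s = 1 / (1 - z)` sends the unit disc onto `Re s > 1 / 2`, and the circle without the
point `1` onto the critical line, with `dθ = dt / (1 / 4 + t²)` up to orientation. Re-expanding
the Taylor series of `((s - 1) ζ(s))^k` at `s = 1` in powers of `z` shows that, up to sign, the
`ℓ_{n,k}` are the Taylor coefficients at `0` of `f(z) = (z ζ(1 / (1 - z)))^k`. The claim is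
therefore Parseval's identity for `f` on the unit circle, in `[0, ∞]`. Applying Parseval on
smaller circles and Fatou's lemma bounds the boundary integral by the sum. For the converse, the
integral representation of `ζ(s)` by the fractional part shows that `(s - 1) ζ(s)` grows at most
quadratically for `Re s > 1 / 2`, so `f (1 - z)^k` is bounded; hence so is `f` times
`((1 - z) / (1 + ε - z))^k`, a factor of modulus at most `1` which tends to `1` as `ε → 0`.
Parseval holds for these products by dominated convergence, and letting `ε → 0` bounds the sum by
the boundary integral.
-/

/-- The `n`-th Taylor coefficient of `f` at `c`. -/
noncomputable def taylorCoeff (f : ℂ → ℂ) (c : ℂ) (n : ℕ) : ℂ :=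
  iteratedDeriv n f c / (Nat.factorial n : ℂ)

section Parseval

variable {f : ℂ → ℂ} {c : ℂ} {r : ℝ}

lemma fourierCoeffOn_circleMap (hr : r ≠ 0) (n : ℤ) :
    fourierCoeffOn Real.two_pi_pos (fun θ => f (circleMap c r θ)) n =
      r ^ n * ((2 * π * I)⁻¹ * ∮ z in C(c, r), (z - c) ^ (-n - 1) * f z) := by
  have hr' : (r : ℂ) ≠ 0 := mod_cast hr
  have hpi : (π : ℂ) ≠ 0 := mod_cast Real.pi_ne_zero
  have integrand_eq (θ : ℝ) : fourier (-n) (θ : AddCircle (2 * π - 0)) • f (circleMap c r θ) =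
      r ^ n * I⁻¹ * (deriv (circleMap c r) θ •
        ((circleMap c r θ - c) ^ (-n - 1) * f (circleMap c r θ))) := by
    have hexp : fourier (-n) (θ : AddCircle (2 * π - 0)) = Complex.exp (θ * I) ^ (-n) := by
      rw [fourier_coe_apply, ← Complex.exp_int_mul]
      congr 1
      push_cast
      field_simp
      ring
    rw [hexp, deriv_circleMap, circleMap_sub_center, circleMap_zero, sub_eq_add_neg (-n),
      zpow_add₀ (mul_ne_zero hr' (Complex.exp_ne_zero _)), mul_zpow, zpow_neg (r : ℂ)]
    simp only [smul_eq_mul, zpow_neg_one]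
    field_simp
  rw [fourierCoeffOn_eq_integral, circleIntegral, Complex.real_smul]
  simp_rw [integrand_eq]
  rw [intervalIntegral.integral_const_mul]
  push_cast
  field_simp
  simp

lemma fourierCoeffOn_circleMap_natCast (hr : 0 < r)
    (hf : DifferentiableOn ℂ f (Metric.closedBall c r)) (n : ℕ) :
    fourierCoeffOn Real.two_pi_pos (fun θ => f (circleMap c r θ)) n =
      taylorCoeff f c n * r ^ n := by
  have cauchy : ∮ z in C(c, r), (z - c) ^ (-(n : ℤ) - 1) * f z =
      2 * π * I / (Nat.factorial n : ℂ) * iteratedDeriv n f c := by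
    rw [← smul_eq_mul (2 * π * I / _), ← hf.circleIntegral_one_div_sub_center_pow_smul hr n]
    congr! 2 with z
    rw [smul_eq_mul, one_div, ← zpow_natCast, ← zpow_neg]
    congr 2
    push_cast
    ring
  rw [fourierCoeffOn_circleMap hr.ne', cauchy, taylorCoeff, zpow_natCast]
  field_simp [Real.pi_ne_zero]

lemma fourierCoeffOn_circleMap_eq_zero_of_neg (hr : 0 < r)
    (hf : DifferentiableOn ℂ f (Metric.closedBall c r)) {n : ℤ} (hn : n < 0) :
    fourierCoeffOn Real.two_pi_pos (fun θ => f (circleMap c r θ)) n = 0 := by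
  obtain ⟨m, hm⟩ : ∃ m : ℕ, -n - 1 = m := ⟨(-n - 1).toNat, by omega⟩
  have hd : DifferentiableOn ℂ (fun z => (z - c) ^ m * f z) (Metric.closedBall c r) := by fun_prop
  rw [fourierCoeffOn_circleMap hr.ne', hm]
  simp_rw [zpow_natCast]
  rw [(hd.mono Metric.closure_ball_subset_closedBall).diffContOnCl.circleIntegral_eq_zero hr.le,
    mul_zero, mul_zero]

/-- The uniform probability measure on the interval `(0, 2π)` of angles. -/
noncomputable def angleMeasure : Measure ℝ :=
  (ENNReal.ofReal (2 * π))⁻¹ • volume.restrict (Set.Ioo 0 (2 * π))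

instance : IsProbabilityMeasure angleMeasure := ⟨by
  rw [angleMeasure, Measure.smul_apply, Measure.restrict_apply_univ, Real.volume_Ioo, sub_zero,
    smul_eq_mul, ENNReal.inv_mul_cancel (ENNReal.ofReal_pos.mpr Real.two_pi_pos).ne'
      ENNReal.ofReal_ne_top]⟩

/-- The mean square of `f` on the circle of centre `c` and radius `r`. -/
noncomputable def circleSqMean (f : ℂ → ℂ) (c : ℂ) (r : ℝ) : ENNReal :=
  ∫⁻ θ, ‖f (circleMap c r θ)‖ₑ ^ 2 ∂angleMeasure

lemma circleSqMean_eq_ofReal_integral (hr : 0 ≤ r) (hf : ContinuousOn f (Metric.sphere c r)) :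
    circleSqMean f c r =
      ENNReal.ofReal ((2 * π)⁻¹ * ∫ θ in (0 : ℝ)..2 * π, ‖f (circleMap c r θ)‖ ^ 2) := by
  have hc : Continuous fun θ : ℝ => f (circleMap c r θ) :=
    hf.comp_continuous (continuous_circleMap c r) (circleMap_mem_sphere c hr)
  have hint : IntegrableOn (fun θ => ‖f (circleMap c r θ)‖ ^ 2) (Set.Ioo 0 (2 * π)) :=
    (hc.norm.pow 2).integrableOn_Icc.mono_set Set.Ioo_subset_Icc_self
  rw [circleSqMean, angleMeasure, lintegral_smul_measure, smul_eq_mul,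
    ENNReal.ofReal_mul (p := (2 * π)⁻¹) (by positivity), ENNReal.ofReal_inv_of_pos Real.two_pi_pos,
    intervalIntegral.integral_of_le Real.two_pi_pos.le, ← restrict_Ioo_eq_restrict_Ioc,
    ofReal_integral_eq_lintegral_ofReal hint (Eventually.of_forall fun θ => by positivity)]
  simp_rw [ENNReal.ofReal_pow (norm_nonneg _), ofReal_norm]

lemma circleSqMean_eq_tsum (hr : 0 < r) (hf : DifferentiableOn ℂ f (Metric.closedBall c r)) :
    circleSqMean f c r = ∑' n : ℕ, ‖taylorCoeff f c n * r ^ n‖ₑ ^ 2 := by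
  have hfs : ContinuousOn f (Metric.sphere c r) :=
    hf.continuousOn.mono Metric.sphere_subset_closedBall
  have hc : Continuous fun θ : ℝ => f (circleMap c r θ) :=
    hfs.comp_continuous (continuous_circleMap c r) (circleMap_mem_sphere c hr.le)
  have hL2 : MemLp (fun θ : ℝ => f (circleMap c r θ)) 2
      (volume.restrict (Set.Ioc 0 (2 * π))) := by
    obtain ⟨C, hC⟩ := (isCompact_sphere c r).exists_bound_of_continuousOn hfs
    exact .of_bound hc.aestronglyMeasurable C
      (.of_forall fun θ => hC _ (circleMap_mem_sphere c hr.le θ))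
  have parseval := hasSum_sq_fourierCoeffOn Real.two_pi_pos hL2
  rw [← Nat.cast_injective.hasSum_iff (g := ((↑) : ℕ → ℤ))] at parseval
  · rw [circleSqMean_eq_ofReal_integral hr.le hfs]
    simp only [sub_zero, smul_eq_mul, Function.comp_def, fourierCoeffOn_circleMap_natCast hr hf]
      at parseval
    rw [← parseval.tsum_eq, ENNReal.ofReal_tsum_of_nonneg (fun _ => by positivity)
      parseval.summable]
    simp_rw [ENNReal.ofReal_pow (norm_nonneg _), ofReal_norm]
  · intro n hn
    have hn : n < 0 := by
      by_contra! h
      exact hn ⟨n.toNat, Int.toNat_of_nonneg h⟩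
    rw [fourierCoeffOn_circleMap_eq_zero_of_neg hr hf hn, norm_zero, zero_pow two_ne_zero]

end Parseval

section TaylorCoeff

variable {f g : ℂ → ℂ} {c : ℂ}

lemma taylorCoeff_congr (h : f =ᶠ[𝓝 c] g) (n : ℕ) : taylorCoeff f c n = taylorCoeff g c n := by
  rw [taylorCoeff, h.iteratedDeriv_eq, taylorCoeff]

lemma taylorCoeff_add (hf : AnalyticAt ℂ f c) (hg : AnalyticAt ℂ g c) (n : ℕ) :
    taylorCoeff (fun z => f z + g z) c n = taylorCoeff f c n + taylorCoeff g c n := by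
  simp only [taylorCoeff, iteratedDeriv_fun_add hf.contDiffAt hg.contDiffAt, add_div]

lemma taylorCoeff_const_mul (a : ℂ) (f : ℂ → ℂ) (c : ℂ) (n : ℕ) :
    taylorCoeff (fun z => a * f z) c n = a * taylorCoeff f c n := by
  simp only [taylorCoeff, iteratedDeriv_const_mul_field, mul_div_assoc]

lemma taylorCoeff_sum {ι : Type*} {s : Finset ι} {f : ι → ℂ → ℂ}
    (hf : ∀ i ∈ s, AnalyticAt ℂ (f i) c) (n : ℕ) :
    taylorCoeff (fun z => ∑ i ∈ s, f i z) c n = ∑ i ∈ s, taylorCoeff (f i) c n := by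
  simp only [taylorCoeff, iteratedDeriv_fun_sum fun i hi => (hf i hi).contDiffAt, Finset.sum_div]

lemma taylorCoeff_pow_mul (hf : AnalyticAt ℂ f 0) (j n : ℕ) :
    taylorCoeff (fun z => z ^ j * f z) 0 n = if j ≤ n then taylorCoeff f 0 (n - j) else 0 := by
  rw [taylorCoeff, iteratedDeriv_fun_mul (by fun_prop) hf.contDiffAt]
  simp only [iteratedDeriv_fun_pow_zero, Nat.cast_ite, Nat.cast_zero, mul_ite, mul_zero, ite_mul,
    zero_mul, Finset.sum_ite_eq', Finset.mem_range, Nat.lt_succ_iff]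
  split_ifs with hj
  · have hfact := Nat.choose_mul_factorial_mul_factorial hj
    rw [taylorCoeff, div_eq_div_iff (mod_cast n.factorial_ne_zero)
      (mod_cast (n - j).factorial_ne_zero), ← hfact]
    push_cast
    ring
  · exact zero_div _

lemma taylorCoeff_one_sub_zpow (p : ℤ) (n : ℕ) :
    taylorCoeff (fun z => (1 - z) ^ p) 0 n = (-1) ^ n * ((Ring.choose p n : ℤ) : ℂ) := by
  have descPochhammer_eq :
      ∏ i ∈ Finset.range n, (p - i) = (Nat.factorial n : ℤ) * Ring.choose p n := by
    rw [← nsmul_eq_mul, ← Ring.descPochhammer_eq_factorial_smul_choose,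
      ← Polynomial.eval_eq_smeval, descPochhammer_eval_eq_prod_range]
  rw [taylorCoeff, iteratedDeriv_comp_const_sub n (fun z : ℂ => z ^ p) 1, iteratedDeriv_eq_iterate]
  simp only [iter_deriv_zpow, sub_zero, one_zpow, mul_one, smul_eq_mul]
  rw [div_eq_iff (mod_cast n.factorial_ne_zero), mul_assoc, mul_comm ((Ring.choose p n : ℤ) : ℂ)]
  exact_mod_cast congrArg (fun x : ℤ => (-1) ^ n * (x : ℂ)) descPochhammer_eq

lemma analyticAt_one_sub_zpow (p : ℤ) : AnalyticAt ℂ (fun z : ℂ => (1 - z) ^ p) 0 :=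
  (analyticAt_const.sub analyticAt_id).fun_zpow (by simp)

lemma exists_eq_sum_taylorCoeff_add_pow_mul (hf : AnalyticAt ℂ f c) (n : ℕ) :
    ∃ R : ℂ → ℂ, AnalyticAt ℂ R 0 ∧ ∀ w,
      f (c + w) = ∑ j ∈ Finset.range n, taylorCoeff f c j * w ^ j + w ^ n * R w := by
  have hfc : AnalyticAt ℂ (fun w => f (c + w)) 0 :=
    AnalyticAt.fun_comp (by simpa using hf) (analyticAt_const.add analyticAt_id)
  obtain ⟨R, hR, hfR⟩ := hfc.exists_eq_sum_add_pow_mul n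
  refine ⟨R, hR, fun w => ?_⟩
  rw [hfR]
  simp only [iteratedDeriv_comp_const_add, add_zero, smul_eq_mul, taylorCoeff]
  congr! 2 with j
  ring

lemma taylorCoeff_comp_inv_one_sub_mul_zpow (hf : AnalyticAt ℂ f 1) (p : ℤ) (n : ℕ) :
    taylorCoeff (fun z => f (1 / (1 - z)) * (1 - z) ^ p) 0 n = ∑ j ∈ Finset.range (n + 1),
      taylorCoeff f 1 j * ((-1) ^ (n - j) * ((Ring.choose (p - j) (n - j) : ℤ) : ℂ)) := by
  obtain ⟨R, hR, hfR⟩ := exists_eq_sum_taylorCoeff_add_pow_mul hf (n + 1)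
  let rest (z : ℂ) : ℂ := R (z / (1 - z)) * (1 - z) ^ (p - (n + 1 : ℕ))
  have hrest : AnalyticAt ℂ rest 0 :=
    (AnalyticAt.fun_comp (by simpa using hR) (analyticAt_id.fun_div
      (analyticAt_const.sub analyticAt_id) (by simp))).fun_mul (analyticAt_one_sub_zpow _)
  have expansion : (fun z => f (1 / (1 - z)) * (1 - z) ^ p) =ᶠ[𝓝 0] fun z =>
      (∑ j ∈ Finset.range (n + 1), taylorCoeff f 1 j * (z ^ j * (1 - z) ^ (p - j))) +
        z ^ (n + 1) * rest z := by
    filter_upwards [eventually_ne_nhds (zero_ne_one (α := ℂ))] with z hz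
    have hz' : 1 - z ≠ 0 := sub_ne_zero.mpr hz.symm
    have hw : 1 / (1 - z) = 1 + z / (1 - z) := by field_simp; ring
    have pow_mul_zpow (j : ℕ) :
        (z / (1 - z)) ^ j * (1 - z) ^ p = z ^ j * (1 - z) ^ (p - j) := by
      rw [zpow_sub₀ hz', zpow_natCast, div_pow]
      ring
    rw [hw, hfR, add_mul, Finset.sum_mul]
    simp only [mul_assoc, pow_mul_zpow, rest]
    linear_combination R (z / (1 - z)) * pow_mul_zpow (n + 1)
  have hterm (j : ℕ) : AnalyticAt ℂ (fun z : ℂ => z ^ j * (1 - z) ^ (p - j)) 0 :=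
    AnalyticAt.fun_mul (by fun_prop) (analyticAt_one_sub_zpow _)
  rw [taylorCoeff_congr expansion,
    taylorCoeff_add (Finset.analyticAt_fun_sum _ fun j _ => analyticAt_const.fun_mul (hterm j))
      (AnalyticAt.fun_mul (f := fun z : ℂ => z ^ (n + 1)) (by fun_prop) hrest),
    taylorCoeff_sum fun j _ => analyticAt_const.fun_mul (hterm j),
    taylorCoeff_pow_mul hrest, if_neg (by omega), add_zero]
  refine Finset.sum_congr rfl fun j hj => ?_
  rw [taylorCoeff_const_mul, taylorCoeff_pow_mul (analyticAt_one_sub_zpow _),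
    if_pos (Finset.mem_range_succ_iff.mp hj), taylorCoeff_one_sub_zpow]

end TaylorCoeff

section Disc

variable {f : ℂ → ℂ} {F : ℝ → ℂ}

lemma circleMap_mem_ball_of_mem_Ioo {r : ℝ} (hr : r ∈ Set.Ioo 0 1) (θ : ℝ) :
    circleMap 0 r θ ∈ Metric.ball (0 : ℂ) 1 := by
  simpa [abs_of_pos hr.1] using hr.2

lemma measurable_enorm_circleMap_sq (hf : ContinuousOn f (Metric.ball 0 1)) {r : ℝ}
    (hr : r ∈ Set.Ioo 0 1) : Measurable fun θ : ℝ => ‖f (circleMap 0 r θ)‖ₑ ^ 2 :=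
  (hf.comp_continuous (continuous_circleMap 0 r)
    (circleMap_mem_ball_of_mem_Ioo hr)).enorm.measurable.pow_const 2

lemma circleSqMean_le_tsum (hf : DifferentiableOn ℂ f (Metric.ball 0 1)) {r : ℝ}
    (hr : r ∈ Set.Ioo 0 1) : circleSqMean f 0 r ≤ ∑' n, ‖taylorCoeff f 0 n‖ₑ ^ 2 := by
  rw [circleSqMean_eq_tsum hr.1 (hf.mono (Metric.closedBall_subset_ball hr.2))]
  gcongr with n
  rw [enorm_le_iff_norm_le, norm_mul, norm_pow, norm_real, Real.norm_of_nonneg hr.1.le]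
  exact mul_le_of_le_one_right (norm_nonneg _) (pow_le_one₀ hr.1.le hr.2.le)

lemma tendsto_circleSqMean (hf : DifferentiableOn ℂ f (Metric.ball 0 1)) :
    Tendsto (circleSqMean f 0) (𝓝[<] 1) (𝓝 (∑' n, ‖taylorCoeff f 0 n‖ₑ ^ 2)) := by
  have hIoo : ∀ᶠ r : ℝ in 𝓝[<] 1, r ∈ Set.Ioo 0 1 := Ioo_mem_nhdsLT one_pos
  refine tendsto_order.mpr ⟨fun b hb => ?_, fun b hb => ?_⟩
  · obtain ⟨s, hs⟩ := lt_iSup_iff.mp (ENNReal.tsum_eq_iSup_sum (f := _) ▸ hb)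
    have partial_sum : Tendsto (fun r : ℝ => ∑ n ∈ s, ‖taylorCoeff f 0 n * r ^ n‖ₑ ^ 2) (𝓝[<] 1)
        (𝓝 (∑ n ∈ s, ‖taylorCoeff f 0 n‖ₑ ^ 2)) := by
      refine Tendsto.mono_left (Continuous.tendsto' (by fun_prop) _ _ ?_) nhdsWithin_le_nhds
      simp
    filter_upwards [hIoo, partial_sum.eventually_const_lt hs] with r hr hbr
    rw [circleSqMean_eq_tsum hr.1 (hf.mono (Metric.closedBall_subset_ball hr.2))]
    exact hbr.trans_le (ENNReal.sum_le_tsum s)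
  · filter_upwards [hIoo] with r hr using (circleSqMean_le_tsum hf hr).trans_lt hb

/-- `F θ` is the radial limit of `f` at the boundary point `exp (θ * I)`, for almost every `θ`. -/
def HasRadialLimit (f : ℂ → ℂ) (F : ℝ → ℂ) : Prop :=
  ∀ᵐ θ ∂angleMeasure, Tendsto (fun r => f (circleMap 0 r θ)) (𝓝[<] 1) (𝓝 (F θ))

lemma ae_angleMeasure_mem_Ioo : ∀ᵐ θ ∂angleMeasure, θ ∈ Set.Ioo 0 (2 * π) :=
  Measure.ae_smul_measure (ae_restrict_mem measurableSet_Ioo) _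

lemma tendsto_circleMap_radial (θ : ℝ) :
    Tendsto (fun r => circleMap 0 r θ) (𝓝[<] 1) (𝓝 (circleMap 0 1 θ)) :=
  (Continuous.tendsto (by unfold circleMap; fun_prop) 1).mono_left nhdsWithin_le_nhds

lemma circleMap_one_ne_one {θ : ℝ} (hθ : θ ∈ Set.Ioo 0 (2 * π)) : circleMap 0 1 θ ≠ 1 := by
  intro h
  have h0 : circleMap 0 1 0 = 1 := by simp [circleMap]
  have hinj := injOn_circleMap_of_abs_sub_le' (c := 0) (R := 1) one_ne_zero
    (sub_zero (2 * π)).le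
  exact hθ.1.ne' (hinj ⟨hθ.1.le, hθ.2⟩ ⟨le_rfl, Real.two_pi_pos⟩ (h.trans h0.symm))

lemma hasRadialLimit_of_continuousAt (hf : ∀ z : ℂ, ‖z‖ = 1 → z ≠ 1 → ContinuousAt f z) :
    HasRadialLimit f fun θ => f (circleMap 0 1 θ) := by
  filter_upwards [ae_angleMeasure_mem_Ioo] with θ hθ
  exact (hf _ (by simp) (circleMap_one_ne_one hθ)).tendsto.comp (tendsto_circleMap_radial θ)

lemma exists_seq_tendsto_nhdsLT_one :
    ∃ u : ℕ → ℝ, (∀ n, u n ∈ Set.Ioo 0 1) ∧ Tendsto u atTop (𝓝[<] 1) := by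
  obtain ⟨u, -, hu, hlim⟩ := exists_seq_strictMono_tendsto' (one_pos (α := ℝ))
  exact ⟨u, hu, tendsto_nhdsWithin_iff.mpr ⟨hlim, .of_forall fun n => (hu n).2⟩⟩

theorem lintegral_radialLimit_le_tsum (hf : DifferentiableOn ℂ f (Metric.ball 0 1))
    (hF : HasRadialLimit f F) :
    ∫⁻ θ, ‖F θ‖ₑ ^ 2 ∂angleMeasure ≤ ∑' n, ‖taylorCoeff f 0 n‖ₑ ^ 2 := by
  obtain ⟨u, hu, hlim⟩ := exists_seq_tendsto_nhdsLT_one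
  calc ∫⁻ θ, ‖F θ‖ₑ ^ 2 ∂angleMeasure
      = ∫⁻ θ, liminf (fun n => ‖f (circleMap 0 (u n) θ)‖ₑ ^ 2) atTop ∂angleMeasure :=
        lintegral_congr_ae <| hF.mono fun θ hθ =>
          (ENNReal.Tendsto.pow (hθ.comp hlim).enorm).liminf_eq.symm
    _ ≤ liminf (fun n => circleSqMean f 0 (u n)) atTop :=
        lintegral_liminf_le fun n => measurable_enorm_circleMap_sq hf.continuousOn (hu n)
    _ = ∑' n, ‖taylorCoeff f 0 n‖ₑ ^ 2 := ((tendsto_circleSqMean hf).comp hlim).liminf_eq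

theorem tsum_eq_lintegral_radialLimit_of_bounded {C : ℝ}
    (hf : DifferentiableOn ℂ f (Metric.ball 0 1)) (hF : HasRadialLimit f F)
    (hC : ∀ z ∈ Metric.ball 0 1, ‖f z‖ ≤ C) :
    ∑' n, ‖taylorCoeff f 0 n‖ₑ ^ 2 = ∫⁻ θ, ‖F θ‖ₑ ^ 2 ∂angleMeasure := by
  have hIoo : ∀ᶠ r : ℝ in 𝓝[<] 1, r ∈ Set.Ioo 0 1 := Ioo_mem_nhdsLT one_pos
  refine tendsto_nhds_unique (tendsto_circleSqMean hf) <|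
    tendsto_lintegral_filter_of_dominated_convergence (fun _ => ENNReal.ofReal C ^ 2)
      (hIoo.mono fun r hr => measurable_enorm_circleMap_sq hf.continuousOn hr)
      (hIoo.mono fun r hr => .of_forall fun θ => ?_) (by simp)
      (hF.mono fun θ hθ => ENNReal.Tendsto.pow hθ.enorm)
  gcongr
  rw [← ofReal_norm]
  exact ENNReal.ofReal_le_ofReal (hC _ (circleMap_mem_ball_of_mem_Ioo hr θ))

lemma tsum_le_of_tendsto_pointwise {H : ℕ → ℂ → ℂ} {B : ENNReal}
    (hH : ∀ n, DifferentiableOn ℂ (H n) (Metric.ball 0 1))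
    (hf : DifferentiableOn ℂ f (Metric.ball 0 1))
    (hlim : ∀ z ∈ Metric.ball 0 1, Tendsto (fun n => H n z) atTop (𝓝 (f z)))
    (hB : ∀ n, ∑' m, ‖taylorCoeff (H n) 0 m‖ₑ ^ 2 ≤ B) :
    ∑' m, ‖taylorCoeff f 0 m‖ₑ ^ 2 ≤ B := by
  refine le_of_tendsto (tendsto_circleSqMean hf) ?_
  filter_upwards [Ioo_mem_nhdsLT one_pos] with r hr
  calc circleSqMean f 0 r
      = ∫⁻ θ, liminf (fun n => ‖H n (circleMap 0 r θ)‖ₑ ^ 2) atTop ∂angleMeasure :=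
        lintegral_congr fun θ => (ENNReal.Tendsto.pow
          (hlim _ (circleMap_mem_ball_of_mem_Ioo hr θ)).enorm).liminf_eq.symm
    _ ≤ liminf (fun n => circleSqMean (H n) 0 r) atTop :=
        lintegral_liminf_le fun n => measurable_enorm_circleMap_sq (hH n).continuousOn hr
    _ ≤ liminf (fun _ => B) (atTop : Filter ℕ) :=
        liminf_le_liminf (.of_forall fun n => (circleSqMean_le_tsum (hH n) hr).trans (hB n))
    _ = B := liminf_const B

/-- The damping factor `(1 - z) / (1 + ε - z)`, which for `ε > 0` is bounded by `1` on the closed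
unit disc, vanishes at the singular point `1`, and tends to `1` elsewhere as `ε → 0`. -/
noncomputable def damping (ε : ℝ) (z : ℂ) : ℂ := (1 - z) / (1 + ε - z)

section Damping

variable {z : ℂ} {ε : ℝ}

lemma le_norm_one_add_sub (hz : ‖z‖ ≤ 1) (ε : ℝ) : ε ≤ ‖1 + ε - z‖ :=
  calc ε ≤ (1 + ε - z).re := by
        simp only [sub_re, add_re, one_re, ofReal_re]
        linarith [(Complex.re_le_norm z).trans hz]
    _ ≤ ‖1 + ε - z‖ := Complex.re_le_norm _

lemma one_add_sub_ne_zero (hε : 0 < ε) (hz : ‖z‖ ≤ 1) : (1 + ε - z : ℂ) ≠ 0 :=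
  norm_pos_iff.mp (hε.trans_le (le_norm_one_add_sub hz ε))

lemma differentiableAt_damping (hε : 0 < ε) (hz : ‖z‖ ≤ 1) :
    DifferentiableAt ℂ (damping ε) z :=
  DifferentiableAt.fun_div (by fun_prop) (by fun_prop) (one_add_sub_ne_zero hε hz)

lemma norm_damping_le_one (hε : 0 ≤ ε) (hz : ‖z‖ ≤ 1) : ‖damping ε z‖ ≤ 1 := by
  have hre : z.re ≤ 1 := (Complex.re_le_norm z).trans hz
  rw [damping, norm_div]
  refine div_le_one_of_le₀ ?_ (norm_nonneg _)
  rw [← sq_le_sq₀ (norm_nonneg _) (norm_nonneg _), ← normSq_eq_norm_sq, ← normSq_eq_norm_sq]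
  simp only [normSq_apply, sub_re, sub_im, add_re, add_im, one_re, one_im, ofReal_re, ofReal_im]
  nlinarith

lemma norm_damping_le (hε : 0 < ε) (hz : ‖z‖ ≤ 1) : ‖damping ε z‖ ≤ ‖1 - z‖ / ε := by
  rw [damping, norm_div]
  gcongr
  exact le_norm_one_add_sub hz ε

lemma tendsto_damping (hz : z ≠ 1) : Tendsto (fun ε => damping ε z) (𝓝 0) (𝓝 1) := by
  have hz' : 1 - z ≠ 0 := sub_ne_zero.mpr hz.symm
  have hc : ContinuousAt (fun ε : ℝ => damping ε z) 0 :=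
    ContinuousAt.div (by fun_prop) (by fun_prop) (by simpa using hz')
  simpa [ContinuousAt, damping, div_self hz'] using hc

end Damping

theorem tsum_eq_lintegral_radialLimit {C : ℝ} {k : ℕ}
    (hf : DifferentiableOn ℂ f (Metric.ball 0 1)) (hF : HasRadialLimit f F)
    (hC : ∀ z ∈ Metric.ball 0 1, ‖f z‖ * ‖1 - z‖ ^ k ≤ C) :
    ∑' n, ‖taylorCoeff f 0 n‖ₑ ^ 2 = ∫⁻ θ, ‖F θ‖ₑ ^ 2 ∂angleMeasure := by
  refine le_antisymm ?_ (lintegral_radialLimit_le_tsum hf hF)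
  obtain ⟨ε, -, hε, hε0⟩ := exists_seq_strictAnti_tendsto (0 : ℝ)
  let H (n : ℕ) (z : ℂ) : ℂ := f z * damping (ε n) z ^ k
  have hH (n) : DifferentiableOn ℂ (H n) (Metric.ball 0 1) :=
    hf.fun_mul <| DifferentiableOn.fun_pow (fun z hz => (differentiableAt_damping (hε n)
      (mem_ball_zero_iff.mp hz).le).differentiableWithinAt) k
  have H_radialLimit (n) :
      HasRadialLimit (H n) fun θ => F θ * damping (ε n) (circleMap 0 1 θ) ^ k :=
    hF.mono fun θ hθ => hθ.mul <|
      ((differentiableAt_damping (hε n) (by simp)).continuousAt.tendsto.comp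
        (tendsto_circleMap_radial θ)).pow k
  have H_bounded (n) : ∀ z ∈ Metric.ball 0 1, ‖H n z‖ ≤ C / ε n ^ k := fun z hz =>
    calc ‖H n z‖ = ‖f z‖ * ‖damping (ε n) z‖ ^ k := by rw [norm_mul, norm_pow]
      _ ≤ ‖f z‖ * (‖1 - z‖ / ε n) ^ k := by
        gcongr
        exact norm_damping_le (hε n) (mem_ball_zero_iff.mp hz).le
      _ = ‖f z‖ * ‖1 - z‖ ^ k / ε n ^ k := by rw [div_pow, mul_div_assoc]
      _ ≤ C / ε n ^ k := div_le_div_of_nonneg_right (hC z hz) (pow_pos (hε n) k).le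
  refine tsum_le_of_tendsto_pointwise hH hf (fun z hz => ?_) fun n => ?_
  · have hz1 : z ≠ 1 := by rintro rfl; simp at hz
    simpa using (((tendsto_damping hz1).comp hε0).pow k).const_mul (f z)
  · rw [tsum_eq_lintegral_radialLimit_of_bounded (hH n) (H_radialLimit n) (H_bounded n)]
    gcongr with θ
    rw [enorm_le_iff_norm_le, norm_mul, norm_pow]
    exact mul_le_of_le_one_right (norm_nonneg _)
      (pow_le_one₀ (norm_nonneg _) (norm_damping_le_one (hε n).le (by simp)))

end Disc

section Zeta

lemma zetaPowAux_eq_riemannZeta₁_pow (k : ℕ) : zetaPowAux k = fun s => riemannZeta₁ s ^ k := by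
  ext s
  obtain rfl | hs := eq_or_ne s 1
  · simp [zetaPowAux]
  · rw [zetaPowAux, Function.update_of_ne hs, riemannZeta_eq_inv_sub_mul hs,
      mul_inv_cancel_left₀ (sub_ne_zero.mpr hs)]

lemma differentiable_zetaPowAux (k : ℕ) : Differentiable ℂ (zetaPowAux k) := by
  rw [zetaPowAux_eq_riemannZeta₁_pow]
  fun_prop

/-- The fractional part cut off to `(1, ∞)`, whose Mellin transform at `-s` is
`1 / (s - 1) - ζ(s) / s`. -/
noncomputable def fractTail : ℝ → ℂ := Set.indicator (Set.Ioi 1) fun t => ((Int.fract t : ℝ) : ℂ)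

lemma norm_ofReal_fract_le_one (t : ℝ) : ‖((Int.fract t : ℝ) : ℂ)‖ ≤ 1 := by
  rw [norm_real, Real.norm_of_nonneg (Int.fract_nonneg t)]
  exact (Int.fract_lt_one t).le

lemma norm_fractTail_le_one (t : ℝ) : ‖fractTail t‖ ≤ 1 :=
  (norm_indicator_le_norm_self _ _).trans (norm_ofReal_fract_le_one t)

lemma measurable_fractTail : Measurable fractTail :=
  (Complex.measurable_ofReal.comp measurable_fract).indicator measurableSet_Ioi

lemma mellin_fractTail (s : ℂ) : mellin fractTail (-s) =
    ∫ t in Set.Ioi (1 : ℝ), ((Int.fract t : ℝ) : ℂ) * (t : ℂ) ^ (-(s + 1)) := by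
  rw [mellin, ← Set.inter_eq_self_of_subset_right (Set.Ioi_subset_Ioi zero_le_one),
    ← setIntegral_indicator measurableSet_Ioi]
  refine integral_congr_ae (Eventually.of_forall fun t => ?_)
  by_cases ht : t ∈ Set.Ioi (1 : ℝ)
  · simp only [fractTail, Set.indicator_of_mem ht, smul_eq_mul]
    rw [mul_comm, neg_add']
  · simp only [fractTail, Set.indicator_of_notMem ht, smul_zero]

lemma integrableOn_fract_mul_cpow {s : ℂ} (hs : 0 < s.re) :
    IntegrableOn (fun t : ℝ => ((Int.fract t : ℝ) : ℂ) * (t : ℂ) ^ (-(s + 1))) (Set.Ioi 1) :=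
  (integrableOn_Ioi_cpow_of_lt (by simpa using hs) zero_lt_one).bdd_mul
    (Complex.measurable_ofReal.comp measurable_fract).aestronglyMeasurable
    (.of_forall norm_ofReal_fract_le_one)

lemma norm_mellin_fractTail_le {s : ℂ} (hs : 0 < s.re) : ‖mellin fractTail (-s)‖ ≤ 1 / s.re := by
  have hlt : -(s.re + 1) < -1 := by linarith
  have integral_majorant : ∫ t in Set.Ioi (1 : ℝ), t ^ (-(s.re + 1)) = 1 / s.re := by
    rw [integral_Ioi_rpow_of_lt hlt zero_lt_one, Real.one_rpow, neg_add, neg_add_cancel_right,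
      neg_div_neg_eq]
  rw [mellin_fractTail, ← integral_majorant]
  refine norm_integral_le_of_norm_le (integrableOn_Ioi_rpow_of_lt hlt zero_lt_one) ?_
  filter_upwards [ae_restrict_mem measurableSet_Ioi] with t ht
  have ht0 : 0 < t := zero_lt_one.trans ht
  calc ‖((Int.fract t : ℝ) : ℂ) * (t : ℂ) ^ (-(s + 1))‖
      ≤ 1 * t ^ (-(s + 1)).re := by
        rw [norm_mul, Complex.norm_cpow_eq_rpow_re_of_pos ht0]
        gcongr
        exact norm_ofReal_fract_le_one t
    _ = t ^ (-(s.re + 1)) := by rw [one_mul, neg_re, add_re, one_re]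

lemma differentiableAt_mellin_fractTail {s : ℂ} (hs : 0 < s.re) :
    DifferentiableAt ℂ (fun s => mellin fractTail (-s)) s := by
  have hloc : LocallyIntegrable fractTail :=
    (locallyIntegrable_const (1 : ℝ)).mono measurable_fractTail.aestronglyMeasurable
      (.of_forall fun t => by simpa using norm_fractTail_le_one t)
  have at_top : fractTail =O[atTop] fun t => t ^ (-(0 : ℝ)) :=
    .of_bound 1 (.of_forall fun t => by simpa using norm_fractTail_le_one t)
  have at_zero : fractTail =O[𝓝[>] 0] fun t => t ^ (-(-s.re - 1)) := by
    refine (EventuallyEq.isBigO ?_).trans (isBigO_zero _ _)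
    filter_upwards [Ioo_mem_nhdsGT (zero_lt_one (α := ℝ))] with t ht
    exact Set.indicator_of_notMem (by simpa using ht.2.le) _
  have h : DifferentiableAt ℂ (mellin fractTail) (-s) :=
    mellin_differentiableAt_of_isBigO_rpow (hloc.locallyIntegrableOn _) at_top (by simpa using hs)
      at_zero (by simp)
  exact h.comp s differentiableAt_id.neg

lemma integral_floor_mul_cpow {s : ℂ} (hs : 1 < s.re) :
    ∫ t in Set.Ioi (1 : ℝ), (⌊t⌋₊ : ℂ) * (t : ℂ) ^ (-(s + 1)) =
      1 / (s - 1) - mellin fractTail (-s) := by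
  have hs' : (-s).re < -1 := by simpa using hs
  have integral_cpow : ∫ t in Set.Ioi (1 : ℝ), (t : ℂ) ^ (-s) = 1 / (s - 1) := by
    rw [integral_Ioi_cpow_of_lt hs' zero_lt_one, neg_add_eq_sub, ← neg_sub s 1, ofReal_one,
      one_cpow, neg_div_neg_eq]
  rw [← integral_cpow, mellin_fractTail, ← integral_sub
    (integrableOn_Ioi_cpow_of_lt hs' zero_lt_one)
    (integrableOn_fract_mul_cpow (zero_lt_one.trans hs))]
  refine setIntegral_congr_fun measurableSet_Ioi fun t ht => ?_
  have ht0 : (0 : ℝ) < t := zero_lt_one.trans ht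
  have floor_eq : (⌊t⌋₊ : ℂ) = (t : ℂ) - ((Int.fract t : ℝ) : ℂ) := by
    rw [← ofReal_natCast, natCast_floor_eq_intCast_floor ht0.le, ← ofReal_sub, Int.self_sub_fract]
  have cpow_eq : (t : ℂ) ^ (-s) = t * (t : ℂ) ^ (-(s + 1)) := by
    rw [show -s = 1 + -(s + 1) by ring, cpow_add _ _ (mod_cast ht0.ne'), cpow_one]
  rw [floor_eq, cpow_eq, sub_mul]

lemma riemannZeta_eq_mul_integral_floor {s : ℂ} (hs : 1 < s.re) :
    riemannZeta s = s * ∫ t in Set.Ioi (1 : ℝ), (⌊t⌋₊ : ℂ) * (t : ℂ) ^ (-(s + 1)) := by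
  have hO : (fun n : ℕ => ∑ k ∈ Finset.Icc 1 n, ‖(1 : ℕ → ℂ) k‖) =O[atTop]
      fun n : ℕ => (n : ℝ) ^ (1 : ℝ) := by
    simpa using isBigO_refl _ _
  simpa [LSeries_one_eq_riemannZeta hs] using LSeries_eq_mul_integral' 1 zero_le_one hs hO

lemma riemannZeta₁_eq_of_one_lt_re {s : ℂ} (hs : 1 < s.re) :
    riemannZeta₁ s = s - (s - 1) * s * mellin fractTail (-s) := by
  have hs1 : s ≠ 1 := by rintro rfl; simp at hs
  have hs1' : s - 1 ≠ 0 := sub_ne_zero.mpr hs1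
  have h := riemannZeta_eq_mul_integral_floor hs
  rw [integral_floor_mul_cpow hs, riemannZeta_eq_inv_sub_mul hs1] at h
  field_simp at h
  linear_combination h

lemma riemannZeta₁_eq {s : ℂ} (hs : 0 < s.re) :
    riemannZeta₁ s = s - (s - 1) * s * mellin fractTail (-s) := by
  have hopen (a : ℝ) : IsOpen {s : ℂ | a < s.re} := isOpen_lt continuous_const continuous_re
  have hf : AnalyticOnNhd ℂ riemannZeta₁ {s : ℂ | 0 < s.re} :=
    differentiable_riemannZeta₁.differentiableOn.analyticOnNhd (hopen 0)
  have hg : AnalyticOnNhd ℂ (fun s => s - (s - 1) * s * mellin fractTail (-s))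
      {s : ℂ | 0 < s.re} := by
    refine DifferentiableOn.analyticOnNhd (fun s hs => ?_) (hopen 0)
    have := differentiableAt_mellin_fractTail hs
    exact DifferentiableAt.differentiableWithinAt (by fun_prop)
  have near_two : riemannZeta₁ =ᶠ[𝓝 2] fun s => s - (s - 1) * s * mellin fractTail (-s) := by
    filter_upwards [(hopen 1).mem_nhds (show (1 : ℝ) < (2 : ℂ).re by simp)] with s hs
    exact riemannZeta₁_eq_of_one_lt_re hs
  exact hf.eqOn_of_preconnected_of_eventuallyEq hg
    (convex_halfSpace_re_gt 0).isPreconnected (by simp) near_two hs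

lemma norm_riemannZeta₁_le {s : ℂ} (hs : 0 < s.re) :
    ‖riemannZeta₁ s‖ ≤ ‖s‖ * (1 + ‖s - 1‖ / s.re) := by
  rw [riemannZeta₁_eq hs]
  calc ‖s - (s - 1) * s * mellin fractTail (-s)‖
      ≤ ‖s‖ + ‖s - 1‖ * ‖s‖ * ‖mellin fractTail (-s)‖ := by
        simpa only [norm_mul] using norm_sub_le s ((s - 1) * s * mellin fractTail (-s))
    _ ≤ ‖s‖ + ‖s - 1‖ * ‖s‖ * (1 / s.re) := by
        gcongr
        exact norm_mellin_fractTail_le hs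
    _ = ‖s‖ * (1 + ‖s - 1‖ / s.re) := by ring

end Zeta

section LamEll

open scoped ComplexConjugate

lemma iteratedDeriv_apply_conj {f : ℂ → ℂ} (hf : ∀ z, f (conj z) = conj (f z)) (n : ℕ) (z : ℂ) :
    iteratedDeriv n f (conj z) = conj (iteratedDeriv n f z) := by
  induction n generalizing z with
  | zero => simpa only [iteratedDeriv_zero] using hf z
  | succ n ih =>
    have conj_invariant : conj ∘ iteratedDeriv n f ∘ conj = iteratedDeriv n f := by
      ext z
      simp [ih]
    have hderiv := congrFun (deriv_conj_conj (f := iteratedDeriv n f)) (conj z)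
    rw [conj_invariant] at hderiv
    simpa [iteratedDeriv_succ] using hderiv

lemma zetaPowAux_conj (k : ℕ) (s : ℂ) : zetaPowAux k (conj s) = conj (zetaPowAux k s) := by
  by_cases hs : s = 1
  · simp [hs, zetaPowAux]
  · have hs' : conj s ≠ 1 := fun h => hs (by simpa using congrArg conj h)
    simp [zetaPowAux, Function.update_of_ne hs, Function.update_of_ne hs', riemannZeta_conj]

lemma taylorCoeff_zetaPowAux (k j : ℕ) :
    taylorCoeff (zetaPowAux k) 1 j = ((lam k j / Nat.factorial j : ℝ) : ℂ) := by
  have hreal : conj (iteratedDeriv j (zetaPowAux k) 1) = iteratedDeriv j (zetaPowAux k) 1 := by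
    rw [← iteratedDeriv_apply_conj (zetaPowAux_conj k), map_one]
  rw [taylorCoeff, lam, ofReal_div, ofReal_natCast, conj_eq_iff_re.mp hreal]

/-- The function `z ↦ (z ζ(1 / (1 - z)))^k`, extended analytically to `z = 0`; it is the Möbius
transform of `((s - 1) ζ(s) / s)^k` under `s = 1 / (1 - z)`. -/
noncomputable def discZeta (k : ℕ) (z : ℂ) : ℂ := zetaPowAux k (1 / (1 - z)) * (1 - z) ^ k

lemma taylorCoeff_discZeta (k m : ℕ) :
    taylorCoeff (discZeta k) 0 m = ((∑ j ∈ Finset.range (m + 1), lam k j / Nat.factorial j *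
      ((-1) ^ (m - j) * (Ring.choose ((k : ℤ) - j) (m - j) : ℤ)) : ℝ) : ℂ) := by
  have h := taylorCoeff_comp_inv_one_sub_mul_zpow
    ((differentiable_zetaPowAux k).analyticAt 1) k m
  simp only [zpow_natCast, taylorCoeff_zetaPowAux] at h
  exact_mod_cast h

lemma neg_one_pow_mul_choose_neg_succ (i d : ℕ) :
    (-1) ^ d * Ring.choose (-(i + 1 : ℤ)) d = (i + d).choose i := by
  have hshift : (i + 1 : ℤ) + d - 1 = (i + d : ℕ) := by push_cast; ring
  have hsign : (-1 : ℤ) ^ d * (-1) ^ d = 1 := by rw [← mul_pow, neg_one_mul, neg_neg, one_pow]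
  rw [Ring.choose_neg, hshift, Ring.choose_natCast, Nat.choose_symm_add, Units.smul_def,
    smul_eq_mul, Int.coe_negOnePow_natCast, ← mul_assoc, hsign, one_mul]

lemma ell_sub_of_le {k m : ℕ} (hmk : m ≤ k) :
    (-1) ^ (m + k) * ell k (m - k) = ∑ j ∈ Finset.range (m + 1), lam k j / Nat.factorial j *
      ((-1) ^ (m - j) * (Ring.choose ((k : ℤ) - j) (m - j) : ℤ)) := by
  have hnonpos : ¬ (1 : ℤ) ≤ (m : ℤ) - k := by omega
  have hupper : ((k : ℤ) + ((m : ℤ) - k)).toNat = m := by omega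
  have hlower : (-((m : ℤ) - k)).toNat = k - m := by omega
  rw [ell, if_neg hnonpos, hupper, hlower, ← mul_assoc, Finset.mul_sum]
  refine Finset.sum_congr rfl fun j hj => ?_
  have hjm : j ≤ m := Finset.mem_range_succ_iff.mp hj
  have hchoose : Ring.choose ((k : ℤ) - j) (m - j) = (k - j).choose (k - m) := by
    rw [← Nat.cast_sub (hjm.trans hmk), Ring.choose_natCast,
      ← Nat.choose_symm (Nat.sub_le_sub_right hmk j), Nat.sub_sub_sub_cancel_right hjm]
  have hsign : (-1 : ℝ) ^ (m - j) = (-1) ^ (m + k) * (-1) ^ k * (-1) ^ j := by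
    rw [← pow_add, ← pow_add]
    exact neg_one_pow_congr (by grind)
  rw [hchoose, hsign]
  push_cast
  ring

lemma ell_natCast_add_one (k n : ℕ) :
    (-1) ^ (n + 1) * ell k (n + 1) = ∑ j ∈ Finset.range (k + 1 + (n + 1)),
      lam k j / Nat.factorial j *
        ((-1) ^ (k + 1 + n - j) * (Ring.choose ((k : ℤ) - j) (k + 1 + n - j) : ℤ)) := by
  have low_term_eq_zero (j : ℕ) (hj : j ∈ Finset.range (k + 1)) :
      Ring.choose ((k : ℤ) - j) (k + 1 + n - j) = 0 := by
    rw [← Nat.cast_sub (Finset.mem_range_succ_iff.mp hj), Ring.choose_natCast,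
      Nat.choose_eq_zero_of_lt (by grind), Nat.cast_zero]
  have high_term_eq (i : ℕ) (hi : i ∈ Finset.range (n + 1)) :
      (-1) ^ (k + 1 + n - (k + 1 + i)) *
        Ring.choose ((k : ℤ) - (k + 1 + i : ℕ)) (k + 1 + n - (k + 1 + i)) = n.choose i := by
    have hin : i ≤ n := Finset.mem_range_succ_iff.mp hi
    have htop : (k : ℤ) - (k + 1 + i : ℕ) = -(i + 1 : ℤ) := by push_cast; ring
    rw [htop, Nat.add_sub_add_left, neg_one_pow_mul_choose_neg_succ, Nat.add_sub_cancel' hin]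
  have hlow : ∑ j ∈ Finset.range (k + 1), lam k j / Nat.factorial j *
      ((-1 : ℝ) ^ (k + 1 + n - j) * (Ring.choose ((k : ℤ) - j) (k + 1 + n - j) : ℤ)) = 0 :=
    Finset.sum_eq_zero fun j hj => by simp [low_term_eq_zero j hj]
  have htoNat : ((n : ℤ) + 1).toNat = n + 1 := by omega
  rw [ell, if_pos (by omega), htoNat, ← mul_assoc, ← mul_pow, neg_one_mul, neg_neg, one_pow,
    one_mul, Finset.sum_range_add, hlow, zero_add, ← Finset.Ico_add_one_right_eq_Icc,
    Finset.sum_Ico_eq_sum_range, Nat.add_sub_cancel]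
  refine Finset.sum_congr rfl fun i hi => ?_
  have hcoeff := congrArg (fun x : ℤ => (x : ℝ)) (high_term_eq i hi)
  push_cast at hcoeff ⊢
  rw [hcoeff, Nat.add_sub_cancel_left, add_comm (1 + i) k, add_assoc k 1 i, mul_comm (_ / _),
    mul_div_assoc]

lemma taylorCoeff_discZeta_eq_ell (k m : ℕ) :
    taylorCoeff (discZeta k) 0 m = (((-1) ^ (m + k) * ell k (m - k) : ℝ) : ℂ) := by
  rw [taylorCoeff_discZeta]
  congr 1
  rcases le_or_gt m k with hmk | hkm
  · exact (ell_sub_of_le hmk).symm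
  · obtain ⟨n, rfl⟩ := Nat.exists_eq_add_of_lt hkm
    have hindex : ((k + n + 1 : ℕ) : ℤ) - k = n + 1 := by push_cast; ring
    have hsign : (-1 : ℝ) ^ (k + n + 1 + k) = (-1) ^ (n + 1) := neg_one_pow_congr (by grind)
    rw [hindex, hsign, ell_natCast_add_one]
    simp only [add_right_comm k n 1, add_assoc]

end LamEll

section CriticalLine

lemma norm_one_sub_pos {z : ℂ} (hz : ‖z‖ < 1) : 0 < ‖1 - z‖ := by
  refine norm_pos_iff.mpr (sub_ne_zero.mpr ?_)
  rintro rfl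
  simp at hz

lemma half_lt_re_inv_one_sub {z : ℂ} (hz : ‖z‖ < 1) : 1 / 2 < (1 / (1 - z)).re := by
  have hpos : 0 < normSq (1 - z) := normSq_pos.mpr (norm_pos_iff.mp (norm_one_sub_pos hz))
  have hlt : normSq z < 1 := by
    rw [normSq_eq_norm_sq]
    exact pow_lt_one₀ (norm_nonneg z) hz two_ne_zero
  rw [one_div (1 - z), inv_re, lt_div_iff₀ hpos]
  simp only [normSq_apply, sub_re, one_re, sub_im, one_im] at *
  nlinarith

lemma differentiableAt_discZeta (k : ℕ) {z : ℂ} (hz : z ≠ 1) :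
    DifferentiableAt ℂ (discZeta k) z := by
  have hz' : 1 - z ≠ 0 := sub_ne_zero.mpr hz.symm
  exact ((differentiable_zetaPowAux k _).fun_comp' z (by fun_prop (disch := assumption))).fun_mul
    (by fun_prop)

lemma norm_discZeta_mul_le (k : ℕ) {z : ℂ} (hz : ‖z‖ < 1) :
    ‖discZeta k z‖ * ‖1 - z‖ ^ k ≤ 4 ^ k := by
  have hpos : 0 < ‖1 - z‖ := norm_one_sub_pos hz
  have hne : 1 - z ≠ 0 := norm_pos_iff.mp hpos
  have hre := half_lt_re_inv_one_sub hz
  have hle : ‖1 - z‖ ≤ 2 := (norm_sub_le _ _).trans (by rw [norm_one]; linarith)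
  have hs : 1 / (1 - z) - 1 = z / (1 - z) := by field_simp; ring
  have hzeta : ‖riemannZeta₁ (1 / (1 - z))‖ ≤ 1 / ‖1 - z‖ * (1 + 2 * (‖z‖ / ‖1 - z‖)) := by
    refine (norm_riemannZeta₁_le (by linarith)).trans ?_
    rw [hs, norm_div, norm_div, norm_one]
    gcongr
    rw [div_le_iff₀ (by linarith)]
    nlinarith [div_nonneg (norm_nonneg z) hpos.le]
  rw [discZeta, zetaPowAux_eq_riemannZeta₁_pow, norm_mul, norm_pow, norm_pow, ← mul_pow, ← mul_pow]
  refine pow_le_pow_left₀ (by positivity) ?_ k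
  calc ‖riemannZeta₁ (1 / (1 - z))‖ * ‖1 - z‖ * ‖1 - z‖
      ≤ 1 / ‖1 - z‖ * (1 + 2 * (‖z‖ / ‖1 - z‖)) * ‖1 - z‖ * ‖1 - z‖ := by gcongr
    _ = ‖1 - z‖ + 2 * ‖z‖ := by field_simp
    _ ≤ 4 := by linarith

/-- The angle `θ ∈ (0, 2π)` for which `1 / (1 - exp (θ * I)) = 1 / 2 + t * I`; it parametrizes the
unit circle without `1` by the critical line. -/
noncomputable def criticalAngle (t : ℝ) : ℝ := π - 2 * Real.arctan (2 * t)

lemma hasDerivAt_criticalAngle (t : ℝ) :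
    HasDerivAt criticalAngle (-(1 / (1 / 4 + t ^ 2))) t := by
  refine ((((hasDerivAt_id t).const_mul 2).arctan.const_mul 2).const_sub π).congr_deriv ?_
  simp only [id]
  field_simp
  ring

lemma injective_criticalAngle : Function.Injective criticalAngle := fun a b h => by
  have harctan : Real.arctan (2 * a) = Real.arctan (2 * b) := by
    unfold criticalAngle at h
    linarith
  linarith [Real.arctan_injective harctan]

lemma range_criticalAngle : Set.range criticalAngle = Set.Ioo 0 (2 * π) := by
  ext θ
  simp only [Set.mem_range, Set.mem_Ioo, criticalAngle]
  constructor
  · rintro ⟨t, rfl⟩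
    constructor <;>
      linarith [Real.arctan_lt_pi_div_two (2 * t), Real.neg_pi_div_two_lt_arctan (2 * t)]
  · rintro ⟨hθ₀, hθ₁⟩
    refine ⟨Real.tan ((π - θ) / 2) / 2, ?_⟩
    rw [mul_div_cancel₀ _ two_ne_zero, Real.arctan_tan (by linarith) (by linarith)]
    ring

lemma half_add_mul_I_ne_zero (t : ℝ) : (1 / 2 + t * I : ℂ) ≠ 0 := fun h => by
  simpa using congrArg re h

lemma half_add_mul_I_ne_one (t : ℝ) : (1 / 2 + t * I : ℂ) ≠ 1 := fun h => by
  have := congrArg re h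
  norm_num at this

lemma circleMap_criticalAngle (t : ℝ) :
    circleMap 0 1 (criticalAngle t) = (1 / 2 + t * I - 1) / (1 / 2 + t * I) := by
  have hpos : (0 : ℝ) < 1 + (2 * t) ^ 2 := by positivity
  have hcos : Real.cos (criticalAngle t) = ((2 * t) ^ 2 - 1) / (1 + (2 * t) ^ 2) := by
    rw [criticalAngle, Real.cos_pi_sub, Real.cos_two_mul, Real.cos_sq_arctan]
    field_simp
    ring
  have hsin : Real.sin (criticalAngle t) = 4 * t / (1 + (2 * t) ^ 2) := by
    rw [criticalAngle, Real.sin_pi_sub, Real.sin_two_mul, Real.sin_arctan, Real.cos_arctan,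
      mul_assoc, div_mul_div_comm, Real.mul_self_sqrt hpos.le]
    ring
  have hne : (1 + (2 * t) ^ 2 : ℂ) ≠ 0 := by exact_mod_cast hpos.ne'
  rw [circleMap_zero, ofReal_one, one_mul, exp_mul_I, ← ofReal_cos, ← ofReal_sin, hcos, hsin,
    eq_div_iff (half_add_mul_I_ne_zero t)]
  push_cast
  rw [div_mul_eq_mul_div, ← add_div, div_mul_eq_mul_div, div_eq_iff hne]
  linear_combination (4 * (t : ℂ) ^ 2) * I_sq

lemma norm_discZeta_circleMap (k : ℕ) (t : ℝ) :
    ‖discZeta k (circleMap 0 1 (criticalAngle t))‖ = ‖riemannZeta (1 / 2 + t * I)‖ ^ k := by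
  have hnorm : ‖(1 / 2 + t * I - 1) / (1 / 2 + t * I)‖ = 1 := by
    rw [← circleMap_criticalAngle, norm_circleMap_zero, abs_one]
  have hinv : 1 - circleMap 0 1 (criticalAngle t) = 1 / (1 / 2 + t * I) := by
    rw [circleMap_criticalAngle, one_sub_div (half_add_mul_I_ne_zero t), sub_sub_cancel]
  rw [discZeta, hinv, one_div_one_div, zetaPowAux,
    Function.update_of_ne (half_add_mul_I_ne_one t), ← mul_pow, norm_pow, mul_right_comm,
    mul_one_div, norm_mul, hnorm, one_mul]

lemma lintegral_angleMeasure_eq_lintegral_criticalAngle (g : ℝ → ENNReal) :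
    ∫⁻ θ, g θ ∂angleMeasure = (ENNReal.ofReal (2 * π))⁻¹ *
      ∫⁻ t, ENNReal.ofReal (1 / (1 / 4 + t ^ 2)) * g (criticalAngle t) := by
  have habs (t : ℝ) : |-(1 / (1 / 4 + t ^ 2))| = 1 / (1 / 4 + t ^ 2) := by
    rw [abs_neg, abs_of_pos (by positivity)]
  rw [angleMeasure, lintegral_smul_measure, smul_eq_mul, ← range_criticalAngle, ← Set.image_univ,
    lintegral_image_eq_lintegral_abs_deriv_mul MeasurableSet.univ
      (fun t _ => (hasDerivAt_criticalAngle t).hasDerivWithinAt) injective_criticalAngle.injOn,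
    setLIntegral_univ]
  simp only [habs]

lemma tsum_ell_sq_eq_lintegral_zeta (k : ℕ) :
    ∑' m : ℕ, ENNReal.ofReal (ell k ((m : ℤ) - k) ^ 2) = (ENNReal.ofReal (2 * π))⁻¹ *
      ∫⁻ t : ℝ, ENNReal.ofReal (‖riemannZeta (1 / 2 + t * I)‖ ^ (2 * k) / (1 / 4 + t ^ 2)) := by
  have continuous_boundary (z : ℂ) (_ : ‖z‖ = 1) (hz : z ≠ 1) : ContinuousAt (discZeta k) z :=
    (differentiableAt_discZeta k hz).continuousAt
  have holomorphic : DifferentiableOn ℂ (discZeta k) (Metric.ball 0 1) := fun z hz =>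
    (differentiableAt_discZeta k (by rintro rfl; simp at hz)).differentiableWithinAt
  have coeff_sq (m : ℕ) : ‖taylorCoeff (discZeta k) 0 m‖ₑ ^ 2 =
      ENNReal.ofReal (ell k ((m : ℤ) - k) ^ 2) := by
    rw [taylorCoeff_discZeta_eq_ell, ← ofReal_norm, ← ENNReal.ofReal_pow (norm_nonneg _)]
    simp
  have integrand (t : ℝ) : ENNReal.ofReal (1 / (1 / 4 + t ^ 2)) *
      ‖discZeta k (circleMap 0 1 (criticalAngle t))‖ₑ ^ 2 =
        ENNReal.ofReal (‖riemannZeta (1 / 2 + t * I)‖ ^ (2 * k) / (1 / 4 + t ^ 2)) := by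
    rw [← ofReal_norm, norm_discZeta_circleMap, ← ENNReal.ofReal_pow (by positivity), ← pow_mul',
      ← ENNReal.ofReal_mul (by positivity), one_div_mul_eq_div]
  have key := tsum_eq_lintegral_radialLimit holomorphic
    (hasRadialLimit_of_continuousAt continuous_boundary)
    fun z hz => norm_discZeta_mul_le k (mem_ball_zero_iff.mp hz)
  simpa only [coeff_sq, lintegral_angleMeasure_eq_lintegral_criticalAngle, integrand] using key

lemma continuous_zeta_integrand (k : ℕ) : Continuous fun t : ℝ =>
    ‖riemannZeta (1 / 2 + t * I)‖ ^ (2 * k) / (1 / 4 + t ^ 2) := by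
  have hzeta : Continuous fun t : ℝ => riemannZeta (1 / 2 + t * I) :=
    continuous_iff_continuousAt.mpr fun t =>
      ContinuousAt.comp (f := fun t : ℝ => (1 / 2 + t * I : ℂ))
        (differentiableAt_riemannZeta (half_add_mul_I_ne_one t)).continuousAt (by fun_prop)
  exact (hzeta.norm.pow _).div (by fun_prop) fun t => by positivity

end CriticalLine

lemma summable_iff_tsum_ofReal_ne_top {ι : Type*} {f : ι → ℝ} (hf : ∀ i, 0 ≤ f i) :
    Summable f ↔ ∑' i, ENNReal.ofReal (f i) ≠ ⊤ := by
  refine ⟨Summable.tsum_ofReal_ne_top, fun h => ?_⟩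
  simpa only [ENNReal.toReal_ofReal (hf _)] using ENNReal.summable_toReal h

theorem stmt10 (k : ℕ) (hk : 0 < k) :
    ((Summable fun m : ℕ => (ell k ((m : ℤ) - k)) ^ 2) ↔
      Integrable fun t : ℝ =>
        ‖riemannZeta (1 / 2 + t * Complex.I)‖ ^ (2 * k) / (1 / 4 + t ^ 2)) ∧
    ((Summable fun m : ℕ => (ell k ((m : ℤ) - k)) ^ 2) →
      ∑' m : ℕ, (ell k ((m : ℤ) - k)) ^ 2 =
        (1 / (2 * π)) *
          ∫ t : ℝ, ‖riemannZeta (1 / 2 + t * Complex.I)‖ ^ (2 * k) / (1 / 4 + t ^ 2)) := by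
  have parseval := tsum_ell_sq_eq_lintegral_zeta k
  have hmeas := (continuous_zeta_integrand k).aestronglyMeasurable (μ := volume)
  have hint_nonneg : ∀ᵐ t : ℝ,
      0 ≤ ‖riemannZeta (1 / 2 + t * I)‖ ^ (2 * k) / (1 / 4 + t ^ 2) :=
    Eventually.of_forall fun t => by positivity
  have hell_nonneg (m : ℕ) : 0 ≤ ell k ((m : ℤ) - k) ^ 2 := sq_nonneg _
  constructor
  · rw [summable_iff_tsum_ofReal_ne_top hell_nonneg, parseval,
      ← lintegral_ofReal_ne_top_iff_integrable hmeas hint_nonneg]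
    simp [ENNReal.mul_eq_top, Real.pi_pos]
  · intro hsummable
    have hreal := congrArg ENNReal.toReal parseval
    rwa [← ENNReal.ofReal_tsum_of_nonneg hell_nonneg hsummable,
      ENNReal.toReal_ofReal (tsum_nonneg hell_nonneg), ENNReal.toReal_mul, ENNReal.toReal_inv,
      ENNReal.toReal_ofReal (by positivity), ← integral_eq_lintegral_of_nonneg_ae hint_nonneg hmeas,
      inv_eq_one_div] at hreal
end

section
/- For every integer k ≥ 2 and every ε > 0, one has ℓ_{n,k} = O(n^{(k-2)/2 + ε}) as n → ∞. -/
open scoped Real Topology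
open Complex Filter MeasureTheory Finset Asymptotics

/-!
The map `x ↦ s = 1 / (1 - x)` sends the unit disc onto the half plane `1 / 2 < re s`, and
`s - 1 = w` with `w = x / (1 - x)`. The binomial sums defining `ℓ_{n,k}` are an Euler transform, so
their generating function is `x⁻¹ * (ζ(1 + w) ^ k - P(1 / w))`, where the polynomial `P` collects
the Taylor coefficients of `(s - 1) ^ k * ζ(s) ^ k` of degree at most `k`. The elementary bound
`ζ(s) ≪ |s| ^ (1 / 2)` on `1 / 2 ≤ re s` away from `s = 1` shows that it is
`≪ |1 - x| ^ (-k / 2)` near the unit circle. Cauchy's estimate on the circle of radius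
`1 - 1 / (2 n)` then bounds `ℓ_{n,k}` by the integral of `|1 - x| ^ (-β)` over that circle, which is
`≪ n ^ (β - 1)` for every `β > 1`. The choice `β = k / 2` is available for `3 ≤ k`;
for `k = 2` it is not, which costs the factor `n ^ ε`.
-/

/-! ### Growth of the Riemann zeta function -/

/-- The integral `∫ t in a..∞, {t} t ^ (-s - 1)` of the fractional part. -/
noncomputable def fractIntegral (a : ℝ) (s : ℂ) : ℂ :=
  ∫ t : ℝ in Set.Ioi a, ((Int.fract t : ℝ) : ℂ) * (t : ℂ) ^ (-s - 1)

lemma measurable_ofReal_fract : Measurable fun t : ℝ => ((Int.fract t : ℝ) : ℂ) :=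
  Complex.measurable_ofReal.comp measurable_fract

lemma integrableOn_Ioi_fract_mul_cpow {a : ℝ} (ha : 0 < a) {s : ℂ} (hs : 0 < s.re) :
    IntegrableOn (fun t : ℝ => ((Int.fract t : ℝ) : ℂ) * (t : ℂ) ^ (-s - 1)) (Set.Ioi a) :=
  (integrableOn_Ioi_cpow_of_lt (by simpa [neg_sub_left] using hs) ha).bdd_mul
    measurable_ofReal_fract.aestronglyMeasurable (.of_forall norm_ofReal_fract_le_one)

lemma norm_fractIntegral_le {a : ℝ} (ha : 0 < a) {s : ℂ} (hs : 0 < s.re) :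
    ‖fractIntegral a s‖ ≤ a ^ (-s.re) / s.re := by
  have hexp : -s.re - 1 < -1 := by linarith
  calc ‖fractIntegral a s‖
      ≤ ∫ t : ℝ in Set.Ioi a, t ^ (-s.re - 1) := by
        refine norm_integral_le_of_norm_le (integrableOn_Ioi_rpow_of_lt hexp ha) ?_
        filter_upwards [ae_restrict_mem measurableSet_Ioi] with t ht
        have ht0 : 0 < t := ha.trans ht
        rw [norm_mul, Complex.norm_cpow_eq_rpow_re_of_pos ht0]
        exact mul_le_of_le_one_left (by positivity) (norm_ofReal_fract_le_one t)
    _ = a ^ (-s.re) / s.re := by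
        rw [integral_Ioi_rpow_of_lt hexp ha, sub_add_cancel, neg_div_neg_eq]

lemma fractIntegral_eq_mellin {a : ℝ} (ha : 0 ≤ a) (s : ℂ) :
    fractIntegral a s = mellin ((Set.Ioi a).indicator fun t => ((Int.fract t : ℝ) : ℂ)) (-s) := by
  have hpoint (t : ℝ) : (t : ℂ) ^ (-s - 1) •
      (Set.Ioi a).indicator (fun t : ℝ => ((Int.fract t : ℝ) : ℂ)) t =
        (Set.Ioi a).indicator (fun t : ℝ => ((Int.fract t : ℝ) : ℂ) * (t : ℂ) ^ (-s - 1)) t := by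
    by_cases ht : t ∈ Set.Ioi a <;> simp [ht, mul_comm]
  simp only [mellin, hpoint]
  rw [setIntegral_indicator measurableSet_Ioi, Set.inter_eq_right.2 (Set.Ioi_subset_Ioi ha),
    fractIntegral]

lemma differentiableAt_fractIntegral {a : ℝ} (ha : 0 < a) {s : ℂ} (hs : 0 < s.re) :
    DifferentiableAt ℂ (fractIntegral a) s := by
  set f : ℝ → ℂ := (Set.Ioi a).indicator fun t => ((Int.fract t : ℝ) : ℂ)
  have hbound (t : ℝ) : ‖f t‖ ≤ 1 :=
    (norm_indicator_le_norm_self _ t).trans (norm_ofReal_fract_le_one t)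
  have hloc : LocallyIntegrableOn f (Set.Ioi 0) :=
    ((locallyIntegrable_const (1 : ℝ)).mono
      (measurable_ofReal_fract.indicator measurableSet_Ioi).aestronglyMeasurable
      (.of_forall fun t => by simpa using hbound t)).locallyIntegrableOn _
  have htop : f =O[atTop] fun t : ℝ => t ^ (-0 : ℝ) :=
    .of_bound 1 (.of_forall fun t => by simpa using hbound t)
  have hzero : f =O[𝓝[>] 0] fun t : ℝ => t ^ (-(-s.re - 1)) := by
    refine EventuallyEq.trans_isBigO ?_ (isBigO_zero _ _)
    filter_upwards [mem_nhdsWithin_of_mem_nhds (Iio_mem_nhds ha)] with t ht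
    exact Set.indicator_of_notMem (not_lt.2 ht.le) _
  have hmellin : DifferentiableAt ℂ (mellin f) (-s) :=
    mellin_differentiableAt_of_isBigO_rpow hloc htop (by simpa using hs) hzero (by simp)
  rw [funext (fractIntegral_eq_mellin ha.le)]
  exact hmellin.comp s differentiableAt_id.neg

lemma ofReal_mul_cpow_neg_sub_one {t : ℝ} (ht : 0 < t) (s : ℂ) :
    (t : ℂ) * (t : ℂ) ^ (-s - 1) = (t : ℂ) ^ (-s) := by
  have ht0 : (t : ℂ) ≠ 0 := ofReal_ne_zero.2 ht.ne'
  rw [cpow_sub _ _ ht0, cpow_one, mul_div_cancel₀ _ ht0]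

lemma riemannZeta_eq_sub_mul_fractIntegral_of_one_lt_re {s : ℂ} (hs : 1 < s.re) :
    riemannZeta s = s / (s - 1) - s * fractIntegral 1 s := by
  have hO : (fun n : ℕ ↦ ∑ k ∈ Icc 1 n, (1 : ℕ → ℂ) k) =O[atTop] fun n : ℕ ↦ (n : ℝ) ^ (1 : ℝ) :=
    .of_bound 1 (.of_forall fun n => by simp)
  have hfloor : ∀ t ∈ Set.Ioi (1 : ℝ), (∑ k ∈ Icc 1 ⌊t⌋₊, (1 : ℕ → ℂ) k) * (t : ℂ) ^ (-(s + 1)) =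
      (t : ℂ) ^ (-s) - ((Int.fract t : ℝ) : ℂ) * (t : ℂ) ^ (-s - 1) := fun t ht => by
    have ht0 : 0 < t := zero_lt_one.trans ht
    have hfract : (⌊t⌋₊ : ℂ) = t - (Int.fract t : ℝ) := by
      rw [← ofReal_natCast, natCast_floor_eq_intCast_floor ht0.le, ← Int.self_sub_fract,
        ofReal_sub]
    have hsum : ∑ k ∈ Icc 1 ⌊t⌋₊, (1 : ℕ → ℂ) k = (⌊t⌋₊ : ℂ) := by simp
    rw [hsum, hfract, neg_add', sub_mul, ofReal_mul_cpow_neg_sub_one ht0]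
  have hint : ∫ t : ℝ in Set.Ioi 1, (t : ℂ) ^ (-s) = (s - 1)⁻¹ := by
    rw [integral_Ioi_cpow_of_lt (by simpa using hs) one_pos, ofReal_one, one_cpow, neg_add_eq_sub,
      ← neg_sub s 1, neg_div_neg_eq, one_div]
  rw [← LSeries_one_eq_riemannZeta hs,
    LSeries_eq_mul_integral 1 zero_le_one hs (LSeriesSummable_one_iff.2 hs) hO,
    setIntegral_congr_fun measurableSet_Ioi hfloor,
    integral_sub (integrableOn_Ioi_cpow_of_lt (by simpa using hs) one_pos)
      (integrableOn_Ioi_fract_mul_cpow one_pos (by linarith)), hint, mul_sub, fractIntegral,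
    div_eq_mul_inv]

lemma riemannZeta_eq_sub_mul_fractIntegral {s : ℂ} (hs : 0 < s.re) (hs1 : s ≠ 1) :
    riemannZeta s = s / (s - 1) - s * fractIntegral 1 s := by
  set f : ℂ → ℂ := fun w => w - w * (w - 1) * fractIntegral 1 w
  have hopen (a : ℝ) : IsOpen {w : ℂ | a < w.re} := isOpen_lt continuous_const continuous_re
  have hdiff : DifferentiableOn ℂ f {w | 0 < w.re} := fun w hw =>
    (differentiableAt_id.sub ((differentiableAt_id.mul (differentiableAt_id.sub_const 1)).mul
      (differentiableAt_fractIntegral one_pos hw))).differentiableWithinAt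
  have hext : Set.EqOn riemannZeta₁ f {w | 0 < w.re} := by
    refine AnalyticOnNhd.eqOn_of_preconnected_of_eventuallyEq
      (differentiable_riemannZeta₁.differentiableOn.analyticOnNhd (hopen 0))
      (hdiff.analyticOnNhd (hopen 0)) (convex_halfSpace_re_gt 0).isPreconnected
      (z₀ := 2) (by simp) ?_
    filter_upwards [(hopen 1).mem_nhds (show (1 : ℝ) < (2 : ℂ).re by simp)] with w hw
    have hw1 : w - 1 ≠ 0 := sub_ne_zero.2 fun h => by simp [h] at hw
    have h := riemannZeta_eq_inv_sub_mul (sub_ne_zero.1 hw1)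
    rw [riemannZeta_eq_sub_mul_fractIntegral_of_one_lt_re hw] at h
    field_simp at h
    simp only [f, ← h]
    ring
  have hs1' : s - 1 ≠ 0 := sub_ne_zero.2 hs1
  rw [riemannZeta_eq_inv_sub_mul hs1, hext hs]
  simp only [f]
  field_simp

lemma fractIntegral_natCast_eq_add {N : ℕ} (hN : N ≠ 0) {s : ℂ} (hs : 0 < s.re) :
    fractIntegral N s = (∫ t : ℝ in (N : ℝ)..(N + 1), ((t : ℂ) - N) * (t : ℂ) ^ (-s - 1)) +
      fractIntegral (N + 1) s := by
  have hN0 : (0 : ℝ) < N := by positivity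
  have hint := integrableOn_Ioi_fract_mul_cpow hN0 hs
  have hfract : Set.EqOn (fun t : ℝ => ((Int.fract t : ℝ) : ℂ) * (t : ℂ) ^ (-s - 1))
      (fun t : ℝ => ((t : ℂ) - N) * (t : ℂ) ^ (-s - 1)) (Set.Ioo (N : ℝ) (N + 1)) := fun t ht => by
    have hfloor : ⌊t⌋ = N := Int.floor_eq_iff.2 ⟨by simpa using ht.1.le, by simpa using ht.2⟩
    simp [Int.fract, hfloor]
  rw [fractIntegral, ← intervalIntegral.integral_interval_add_Ioi hint
    (hint.mono_set (Set.Ioi_subset_Ioi (by linarith : (N : ℝ) ≤ N + 1))),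
    intervalIntegral.integral_congr_Ioo_of_le (by linarith) hfract, fractIntegral]

lemma mul_integral_sub_mul_cpow {a b : ℝ} (ha : 0 < a) (hab : a ≤ b) {s : ℂ} (hs : s ≠ 0)
    (hs1 : s ≠ 1) :
    s * ∫ t : ℝ in a..b, ((t : ℂ) - a) * (t : ℂ) ^ (-s - 1) =
      ((a : ℂ) ^ (1 - s) - (b : ℂ) ^ (1 - s)) / (s - 1) - (b - a) * (b : ℂ) ^ (-s) := by
  have h0 : (0 : ℝ) ∉ Set.uIcc a b := by simp [Set.uIcc_of_le hab, ha]
  have hs1' : s - 1 ≠ 0 := sub_ne_zero.2 hs1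
  have hs1'' : -s + 1 ≠ 0 := by rw [neg_add_eq_sub]; exact sub_ne_zero.2 hs1.symm
  have hexpand : ∀ t ∈ Set.uIcc a b, ((t : ℂ) - a) * (t : ℂ) ^ (-s - 1) =
      (t : ℂ) ^ (-s) - a * (t : ℂ) ^ (-s - 1) := fun t ht => by
    rw [sub_mul, ofReal_mul_cpow_neg_sub_one (ha.trans_le (Set.uIcc_of_le hab ▸ ht).1)]
  have hcpow {t : ℝ} (ht : 0 < t) : (t : ℂ) ^ (-s + 1) = t * (t : ℂ) ^ (-s) := by
    rw [cpow_add _ _ (ofReal_ne_zero.2 ht.ne'), cpow_one, mul_comm]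
  rw [intervalIntegral.integral_congr hexpand, intervalIntegral.integral_sub
    (intervalIntegral.intervalIntegrable_cpow (.inr h0))
    ((intervalIntegral.intervalIntegrable_cpow (.inr h0)).const_mul _),
    intervalIntegral.integral_const_mul, integral_cpow (.inr ⟨by simpa using hs1, h0⟩),
    integral_cpow (.inr ⟨by simpa using hs, h0⟩), ← neg_add_eq_sub s 1, sub_add_cancel,
    hcpow ha, hcpow (ha.trans_le hab)]
  field_simp
  ring

lemma riemannZeta_eq_sum_add_sub {s : ℂ} (hs : 0 < s.re) (hs1 : s ≠ 1) {N : ℕ} (hN : 1 ≤ N) :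
    riemannZeta s = ∑ n ∈ Icc 1 N, (n : ℂ) ^ (-s) + (N : ℂ) ^ (1 - s) / (s - 1) -
      s * fractIntegral N s := by
  induction N, hN using Nat.le_induction with
  | base =>
    have hs1' : s - 1 ≠ 0 := sub_ne_zero.2 hs1
    rw [riemannZeta_eq_sub_mul_fractIntegral hs hs1]
    simp
    field_simp
    ring
  | succ N hN ih =>
    have hs0 : s ≠ 0 := fun h => by simp [h] at hs
    have hstep := mul_integral_sub_mul_cpow (a := N) (b := N + 1) (by positivity) (by simp) hs0 hs1
    rw [ih, fractIntegral_natCast_eq_add (by lia) hs, sum_Icc_succ_top (by lia)]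
    push_cast at hstep ⊢
    rw [mul_add, hstep]
    ring

lemma sum_Icc_rpow_neg_le {σ : ℝ} (hσ : 0 ≤ σ) (hσ1 : σ < 1) {N : ℕ} (hN : 1 ≤ N) :
    ∑ n ∈ Icc 1 N, (n : ℝ) ^ (-σ) ≤ (N : ℝ) ^ (1 - σ) / (1 - σ) := by
  have hanti : AntitoneOn (fun t : ℝ => t ^ (-σ)) (Set.Icc (1 : ℕ) N) := fun x hx y _ hxy =>
    Real.rpow_le_rpow_of_nonpos (zero_lt_one.trans_le (by simpa using hx.1)) hxy (by linarith)
  have hint : ∫ t : ℝ in (1 : ℕ)..N, t ^ (-σ) = ((N : ℝ) ^ (1 - σ) - 1) / (1 - σ) := by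
    rw [integral_rpow (.inl (by linarith)), neg_add_eq_sub, Nat.cast_one, Real.one_rpow]
  have hone : 1 ≤ 1 / (1 - σ) := by rw [le_div_iff₀ (by linarith)]; linarith
  calc ∑ n ∈ Icc 1 N, (n : ℝ) ^ (-σ)
      = 1 + ∑ n ∈ Ico 1 N, ((n + 1 : ℕ) : ℝ) ^ (-σ) := by
        rw [← Ico_add_one_right_eq_Icc, sum_eq_sum_Ico_succ_bot (by lia), Nat.cast_one,
          Real.one_rpow, sum_Ico_add' (fun n : ℕ => (n : ℝ) ^ (-σ))]
    _ ≤ 1 / (1 - σ) + ((N : ℝ) ^ (1 - σ) - 1) / (1 - σ) :=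
        add_le_add hone (hint ▸ hanti.sum_le_integral_Ico hN)
    _ = (N : ℝ) ^ (1 - σ) / (1 - σ) := by ring

lemma norm_riemannZeta_le {σ δ : ℝ} (hσ : 0 < σ) (hσ1 : σ < 1) (hδ : 0 < δ) {s : ℂ}
    (hs : σ ≤ s.re) (hsδ : δ ≤ ‖s - 1‖) {N : ℕ} (hN : 1 ≤ N) (hsN : ‖s‖ ≤ N) :
    ‖riemannZeta s‖ ≤ (1 / (1 - σ) + 1 / δ + 1 / σ) * (N : ℝ) ^ (1 - σ) := by
  have hre : 0 < s.re := hσ.trans_le hs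
  have hs1 : s ≠ 1 := fun h => by simp [h] at hsδ; linarith
  have hN1 : (1 : ℝ) ≤ N := by exact_mod_cast hN
  have hsum : ‖∑ n ∈ Icc 1 N, (n : ℂ) ^ (-s)‖ ≤ (N : ℝ) ^ (1 - σ) / (1 - σ) := by
    refine (norm_sum_le_of_le _ fun n hn => ?_).trans (sum_Icc_rpow_neg_le hσ.le hσ1 hN)
    have hn1 : 1 ≤ n := (mem_Icc.1 hn).1
    rw [norm_natCast_cpow_of_pos hn1]
    exact Real.rpow_le_rpow_of_exponent_le (by exact_mod_cast hn1) (by simpa using hs)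
  have hpole : ‖(N : ℂ) ^ (1 - s) / (s - 1)‖ ≤ (N : ℝ) ^ (1 - σ) / δ := by
    rw [norm_div, norm_natCast_cpow_of_pos hN]
    gcongr
    rw [sub_re, one_re]
    linarith
  have htail : ‖s * fractIntegral N s‖ ≤ (N : ℝ) ^ (1 - σ) / σ := by
    calc ‖s * fractIntegral N s‖
        ≤ N * ((N : ℝ) ^ (-s.re) / s.re) := by
          rw [norm_mul]
          gcongr
          exact norm_fractIntegral_le (by linarith) hre
      _ ≤ N * ((N : ℝ) ^ (-σ) / σ) := by gcongr
      _ = (N : ℝ) ^ (1 - σ) / σ := by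
          rw [sub_eq_add_neg, Real.rpow_one_add' (by linarith) (by linarith), mul_div_assoc]
  rw [riemannZeta_eq_sum_add_sub hre hs1 hN]
  calc _ ≤ (N : ℝ) ^ (1 - σ) / (1 - σ) + (N : ℝ) ^ (1 - σ) / δ + (N : ℝ) ^ (1 - σ) / σ :=
        norm_sub_le_of_le (norm_add_le_of_le hsum hpole) htail
    _ = (1 / (1 - σ) + 1 / δ + 1 / σ) * (N : ℝ) ^ (1 - σ) := by ring

theorem exists_norm_riemannZeta_le {σ δ : ℝ} (hσ : 0 < σ) (hσ1 : σ < 1) (hδ : 0 < δ) :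
    ∃ C, ∀ s : ℂ, σ ≤ s.re → δ ≤ ‖s - 1‖ → ‖riemannZeta s‖ ≤ C * ‖s‖ ^ (1 - σ) := by
  have : 0 < 1 - σ := sub_pos.2 hσ1
  refine ⟨(1 / (1 - σ) + 1 / δ + 1 / σ) * (1 + 1 / σ) ^ (1 - σ), fun s hs hsδ => ?_⟩
  have hnorm : σ ≤ ‖s‖ := hs.trans (re_le_norm s)
  have hceil : (⌈‖s‖⌉₊ : ℝ) ≤ (1 + 1 / σ) * ‖s‖ := calc
    (⌈‖s‖⌉₊ : ℝ) ≤ ‖s‖ + 1 := (Nat.ceil_lt_add_one (norm_nonneg s)).le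
    _ ≤ ‖s‖ + ‖s‖ / σ := by gcongr; exact (one_le_div hσ).2 hnorm
    _ = (1 + 1 / σ) * ‖s‖ := by ring
  calc ‖riemannZeta s‖
      ≤ (1 / (1 - σ) + 1 / δ + 1 / σ) * (⌈‖s‖⌉₊ : ℝ) ^ (1 - σ) :=
        norm_riemannZeta_le hσ hσ1 hδ hs hsδ (Nat.ceil_pos.2 (hσ.trans_le hnorm)) (Nat.le_ceil _)
    _ ≤ (1 / (1 - σ) + 1 / δ + 1 / σ) * ((1 + 1 / σ) * ‖s‖) ^ (1 - σ) := by gcongr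
    _ = _ := by rw [Real.mul_rpow (by positivity) (norm_nonneg s), mul_assoc]

/-! ### Power series on the unit disc -/

section PowerSeries

variable {𝕜 : Type*} [NormedField 𝕜]

lemma hasSum_choose_mul_pow (i : ℕ) {x : 𝕜} (hx : ‖x‖ < 1) :
    HasSum (fun m : ℕ => (m.choose i : 𝕜) * x ^ m) ((1 - x)⁻¹ * (x / (1 - x)) ^ i) := by
  have hshift : HasSum (fun m : ℕ => ((m + i).choose i : 𝕜) * x ^ (m + i))
      ((1 - x)⁻¹ * (x / (1 - x)) ^ i) := by
    convert! (hasSum_choose_mul_geometric_of_norm_lt_one i hx).mul_left (x ^ i) using 1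
    · ext m
      ring
    · rw [div_pow, pow_succ, one_div, mul_inv]
      ring
  rw [← hasSum_nat_add_iff' i, sum_eq_zero fun m hm => by
    rw [Nat.choose_eq_zero_of_lt (mem_range.1 hm), Nat.cast_zero, zero_mul], sub_zero]
  exact hshift

theorem hasSum_sum_choose_mul_pow [CompleteSpace 𝕜] {b : ℕ → 𝕜} {x : 𝕜} (hx : ‖x‖ < 1)
    (hb : Summable fun i => ‖b i‖ * (‖x‖ / (1 - ‖x‖)) ^ i) :
    HasSum (fun m : ℕ => (∑ i ∈ range (m + 1), (m.choose i : 𝕜) * b i) * x ^ m)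
      ((1 - x)⁻¹ * ∑' i, b i * (x / (1 - x)) ^ i) := by
  set g : ℕ × ℕ → 𝕜 := fun p => b p.1 * ((p.2.choose p.1 : 𝕜) * x ^ p.2) with hg
  set G : ℕ × ℕ → ℝ := fun p => ‖b p.1‖ * ((p.2.choose p.1 : ℝ) * ‖x‖ ^ p.2) with hG
  have hGrow (i : ℕ) : HasSum (fun m => G (i, m))
      (‖b i‖ * ((1 - ‖x‖)⁻¹ * (‖x‖ / (1 - ‖x‖)) ^ i)) :=
    (hasSum_choose_mul_pow i (x := ‖x‖) (by rwa [norm_norm])).mul_left ‖b i‖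
  have hGsum : Summable G := by
    refine (summable_prod_of_nonneg fun p => by positivity).2 ⟨fun i => (hGrow i).summable, ?_⟩
    refine (hb.mul_left (1 - ‖x‖)⁻¹).congr fun i => ?_
    rw [(hGrow i).tsum_eq]
    ring
  have hgG (p : ℕ × ℕ) : ‖g p‖ ≤ G p := by
    simp only [hg, hG, norm_mul, norm_pow]
    gcongr
    exact (Nat.norm_cast_le _).trans_eq (by rw [norm_one, mul_one])
  have hgsum : Summable g := .of_norm_bounded hGsum hgG
  have hrow : ∑' p, g p = (1 - x)⁻¹ * ∑' i, b i * (x / (1 - x)) ^ i := by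
    rw [hgsum.tsum_prod, ← tsum_mul_left]
    congr with i
    rw [((hasSum_choose_mul_pow i hx).mul_left (b i)).tsum_eq]
    ring
  have hcol (m : ℕ) : HasSum (fun i => g (i, m))
      ((∑ i ∈ range (m + 1), (m.choose i : 𝕜) * b i) * x ^ m) := by
    have hfinite : ∑ i ∈ range (m + 1), g (i, m) =
        (∑ i ∈ range (m + 1), (m.choose i : 𝕜) * b i) * x ^ m := by
      rw [sum_mul]
      exact sum_congr rfl fun i _ => by simp only [hg]; ring
    rw [← hfinite]
    refine hasSum_sum_of_ne_finset_zero fun i hi => ?_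
    simp only [hg]
    rw [Nat.choose_eq_zero_of_lt (by simpa using hi), Nat.cast_zero, zero_mul, mul_zero]
  rw [← hrow]
  exact ((Equiv.prodComm ℕ ℕ).hasSum_iff.2 hgsum.hasSum).prod_fiberwise hcol

lemma hasSum_nat_add_mul_pow {c : ℕ → 𝕜} {w S : 𝕜} (hc : HasSum (fun j => c j * w ^ j) S)
    (hw : w ≠ 0) (N : ℕ) :
    HasSum (fun i => c (i + N) * w ^ i) ((S - ∑ i ∈ range N, c i * w ^ i) / w ^ N) := by
  convert! ((hasSum_nat_add_iff' N).2 hc).div_const (w ^ N) using 1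
  ext i
  field_simp
  ring

end PowerSeries

lemma hasFPowerSeriesOnBall_ofScalars {c : ℕ → ℂ} {F : ℂ → ℂ}
    (hF : ∀ x : ℂ, ‖x‖ < 1 → HasSum (fun m => c m * x ^ m) (F x)) :
    HasFPowerSeriesOnBall F (FormalMultilinearSeries.ofScalars ℂ c) 0 1 := by
  refine ⟨le_of_forall_lt_imp_le_of_dense fun ρ hρ => ?_, one_pos, fun {y} hy => ?_⟩
  · lift ρ to NNReal using hρ.ne_top
    apply FormalMultilinearSeries.le_radius_of_summable
    simpa using (hF ρ (by simpa using hρ)).summable.norm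
  · rw [← ENNReal.coe_one, Metric.eball_coe, NNReal.coe_one, mem_ball_zero_iff] at hy
    simpa [mul_comm] using hF y hy

lemma norm_coeff_le_of_hasSum {c : ℕ → ℂ} {F : ℂ → ℂ}
    (hF : ∀ x : ℂ, ‖x‖ < 1 → HasSum (fun m => c m * x ^ m) (F x)) {r : ℝ} (hr : 0 < r)
    (hr1 : r < 1) (m : ℕ) :
    ‖c m‖ ≤ ((2 * π)⁻¹ * ∫ θ : ℝ in 0..2 * π, ‖F (circleMap 0 r θ)‖) * r⁻¹ ^ m := by
  have hseries := hasFPowerSeriesOnBall_ofScalars hF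
  have hdiff : DifferentiableOn ℂ F (Metric.closedBall 0 r) := by
    refine hseries.differentiableOn.mono ?_
    rw [← ENNReal.coe_one, Metric.eball_coe, NNReal.coe_one]
    exact Metric.closedBall_subset_ball hr1
  lift r to NNReal using hr.le
  have hcauchy := hdiff.hasFPowerSeriesOnBall (by exact_mod_cast hr)
  have huniq := hseries.hasFPowerSeriesAt.eq_formalMultilinearSeries hcauchy.hasFPowerSeriesAt
  have hle := norm_cauchyPowerSeries_le F 0 r m
  rwa [← huniq, FormalMultilinearSeries.norm_apply_eq_norm_coef,
    FormalMultilinearSeries.coeff_ofScalars, abs_of_pos hr] at hle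

lemma normSq_one_sub_circleMap (r θ : ℝ) :
    normSq (1 - circleMap 0 r θ) = (1 - r) ^ 2 + 4 * r * Real.sin (θ / 2) ^ 2 := by
  have hcos : Real.cos θ = 1 - 2 * Real.sin (θ / 2) ^ 2 := by
    have h := Real.cos_two_mul (θ / 2)
    rw [mul_div_cancel₀ θ two_ne_zero] at h
    rw [h, Real.sin_sq]
    ring
  have hre : (1 - circleMap 0 r θ).re = 1 - r * Real.cos θ := by simp [circleMap, exp_re]
  have him : (1 - circleMap 0 r θ).im = -(r * Real.sin θ) := by simp [circleMap, exp_im]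
  rw [normSq_apply, hre, him]
  linear_combination (-2 * r) * hcos + r ^ 2 * Real.sin_sq_add_cos_sq θ

lemma one_sub_add_abs_le_norm_one_sub_circleMap {r : ℝ} (hr : 1 / 2 ≤ r) {θ : ℝ}
    (hθ : |θ| ≤ π) : 1 - r + |θ| ≤ (1 + π) * ‖1 - circleMap 0 r θ‖ := by
  have hradial : 1 - r ≤ ‖1 - circleMap 0 r θ‖ := by
    simpa [abs_of_pos (by linarith : 0 < r)] using norm_sub_norm_le (1 : ℂ) (circleMap 0 r θ)
  have hsin : |Real.sin (θ / 2)| ≤ ‖1 - circleMap 0 r θ‖ := by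
    refine abs_le_of_sq_le_sq' ?_ (norm_nonneg _) |> abs_le.2
    rw [← normSq_eq_norm_sq, normSq_one_sub_circleMap]
    nlinarith [sq_nonneg (1 - r), sq_nonneg (Real.sin (θ / 2))]
  have hjordan : 2 / π * |θ / 2| ≤ |Real.sin (θ / 2)| := by
    refine Real.mul_abs_le_abs_sin ?_
    rw [abs_div, abs_two]
    linarith
  have hangular : |θ| ≤ π * ‖1 - circleMap 0 r θ‖ := by
    rw [abs_div, abs_two, div_mul_div_cancel₀' two_ne_zero, div_le_iff₀' Real.pi_pos] at hjordan
    nlinarith [Real.pi_pos]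
  linarith

lemma integral_add_abs_rpow_neg_le {a R β : ℝ} (ha : 0 < a) (hR : 0 ≤ R) (hβ : 1 < β) :
    ∫ θ : ℝ in -R..R, (a + |θ|) ^ (-β) ≤ 2 / (β - 1) * a ^ (1 - β) := by
  have hcont : Continuous fun θ : ℝ => (a + |θ|) ^ (-β) :=
    (continuous_const.add continuous_abs).rpow_const
      fun θ => .inl (add_pos_of_pos_of_nonneg ha (abs_nonneg θ)).ne'
  have hneg : ∫ θ : ℝ in -R..0, (a + |θ|) ^ (-β) = ∫ θ : ℝ in 0..R, (a + |θ|) ^ (-β) := by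
    simpa using (intervalIntegral.integral_comp_neg (a := 0) (b := R)
      fun θ : ℝ => (a + |θ|) ^ (-β)).symm
  have hpos : ∫ θ : ℝ in 0..R, (a + |θ|) ^ (-β) = (a ^ (1 - β) - (a + R) ^ (1 - β)) / (β - 1) := by
    have habs : ∀ θ ∈ Set.uIcc 0 R, (a + |θ|) ^ (-β) = (a + θ) ^ (-β) := fun θ hθ => by
      rw [abs_of_nonneg (Set.uIcc_of_le hR ▸ hθ).1]
    have h0 : (0 : ℝ) ∉ Set.uIcc a (a + R) := by simp [hR, ha]
    rw [intervalIntegral.integral_congr habs,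
      intervalIntegral.integral_comp_add_left (fun θ : ℝ => θ ^ (-β)), add_zero,
      integral_rpow (.inr ⟨by linarith, h0⟩), neg_add_eq_sub, ← neg_sub β 1, div_neg, ← neg_div,
      neg_sub]
  rw [← intervalIntegral.integral_add_adjacent_intervals (hcont.intervalIntegrable _ 0)
    (hcont.intervalIntegrable _ _), hneg, hpos, ← add_div, div_mul_eq_mul_div]
  have : 0 ≤ (a + R) ^ (1 - β) := by positivity
  gcongr
  linarith

lemma integral_norm_circleMap_le {E : Type*} [SeminormedAddCommGroup E] {F : ℂ → E} {C β r : ℝ}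
    (hβ : 1 < β) (hr : 1 / 2 ≤ r) (hr1 : r < 1)
    (hF : ∀ x : ℂ, ‖x‖ = r → ‖F x‖ ≤ C * ‖1 - x‖ ^ (-β)) :
    ∫ θ : ℝ in 0..2 * π, ‖F (circleMap 0 r θ)‖ ≤
      C * (1 + π) ^ β * (2 / (β - 1)) * (1 - r) ^ (1 - β) := by
  have hr1' : 0 < 1 - r := sub_pos.2 hr1
  have hC : 0 ≤ C := by
    have hne : (1 : ℂ) - r ≠ 0 := mod_cast hr1'.ne'
    exact nonneg_of_mul_nonneg_left ((norm_nonneg _).trans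
      (hF r (Complex.norm_of_nonneg (by linarith)))) (by positivity)
  have hpoint {θ : ℝ} (hθ : |θ| ≤ π) :
      ‖F (circleMap 0 r θ)‖ ≤ C * (1 + π) ^ β * (1 - r + |θ|) ^ (-β) := by
    have hlower := one_sub_add_abs_le_norm_one_sub_circleMap hr hθ
    have hpos : 0 < 1 - r + |θ| := by positivity
    have hnorm : 0 < ‖1 - circleMap 0 r θ‖ :=
      pos_of_mul_pos_right (hpos.trans_le hlower) (by positivity)
    have hbound := hF (circleMap 0 r θ) (by simp [abs_of_pos (by linarith : 0 < r)])
    refine hbound.trans ?_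
    rw [mul_assoc]
    gcongr
    rw [Real.rpow_neg hpos.le, Real.rpow_neg hnorm.le, ← div_eq_mul_inv, ← one_div,
      div_le_div_iff₀ (by positivity) (by positivity), one_mul,
      ← Real.mul_rpow (by positivity) hnorm.le]
    gcongr
  have hcont : Continuous fun θ : ℝ => C * (1 + π) ^ β * (1 - r + |θ|) ^ (-β) :=
    continuous_const.mul ((continuous_const.add continuous_abs).rpow_const
      fun θ => .inl (add_pos_of_pos_of_nonneg hr1' (abs_nonneg θ)).ne')
  calc ∫ θ : ℝ in 0..2 * π, ‖F (circleMap 0 r θ)‖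
      = ∫ θ : ℝ in -π..π, ‖F (circleMap 0 r θ)‖ := by
        have h := ((periodic_circleMap 0 r).comp fun x => ‖F x‖).intervalIntegral_add_eq 0 (-π)
        rwa [zero_add, two_mul, neg_add_cancel_left, ← two_mul] at h
    _ ≤ ∫ θ : ℝ in -π..π, C * (1 + π) ^ β * (1 - r + |θ|) ^ (-β) := by
        refine (Real.le_norm_self _).trans (intervalIntegral.norm_integral_le_of_norm_le
          (by linarith [Real.pi_pos]) (.of_forall fun θ hθ => ?_) (hcont.intervalIntegrable _ _))
        rw [norm_norm]
        exact hpoint (abs_le.2 ⟨hθ.1.le, hθ.2⟩)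
    _ ≤ C * (1 + π) ^ β * (2 / (β - 1) * (1 - r) ^ (1 - β)) := by
        rw [intervalIntegral.integral_const_mul]
        gcongr
        exact integral_add_abs_rpow_neg_le hr1' Real.pi_pos.le hβ
    _ = _ := by ring

lemma inv_one_sub_inv_pow_le_two (m : ℕ) : (1 - (2 * (m + 1 : ℝ))⁻¹)⁻¹ ^ m ≤ 2 := by
  have hinv : (2 * (m + 1 : ℝ))⁻¹ ≤ 1 :=
    inv_le_one_of_one_le₀ (by linarith [m.cast_nonneg (α := ℝ)])
  have hbernoulli : 1 / 2 ≤ (1 - (2 * (m + 1 : ℝ))⁻¹) ^ m := calc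
    (1 / 2 : ℝ) ≤ 1 + m * -(2 * (m + 1 : ℝ))⁻¹ := by field_simp; linarith
    _ ≤ (1 - (2 * (m + 1 : ℝ))⁻¹) ^ m := one_add_mul_le_pow (by linarith) m
  rw [inv_pow]
  exact inv_le_of_inv_le₀ two_pos (by simpa using hbernoulli)

theorem exists_norm_coeff_le_rpow {c : ℕ → ℂ} {F : ℂ → ℂ} {C β : ℝ} (hβ : 1 < β)
    (hc : ∀ x : ℂ, ‖x‖ < 1 → HasSum (fun m => c m * x ^ m) (F x))
    (hF : ∀ x : ℂ, 1 / 2 ≤ ‖x‖ → ‖x‖ < 1 → ‖F x‖ ≤ C * ‖1 - x‖ ^ (-β)) :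
    ∃ K, ∀ m : ℕ, ‖c m‖ ≤ K * (m + 1 : ℝ) ^ (β - 1) := by
  refine ⟨(2 * π)⁻¹ * (C * (1 + π) ^ β * (2 / (β - 1)) * 2 ^ (β - 1)) * 2, fun m => ?_⟩
  set r : ℝ := 1 - (2 * (m + 1 : ℝ))⁻¹ with hr
  have hinv0 : 0 < (2 * (m + 1 : ℝ))⁻¹ := by positivity
  have hinv : (2 * (m + 1 : ℝ))⁻¹ ≤ 1 / 2 := by
    rw [one_div]
    exact inv_anti₀ two_pos (by linarith [m.cast_nonneg (α := ℝ)])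
  have hgap : (1 - r) ^ (1 - β) = 2 ^ (β - 1) * (m + 1 : ℝ) ^ (β - 1) := by
    rw [hr, sub_sub_cancel, Real.inv_rpow (by positivity), ← Real.rpow_neg (by positivity),
      neg_sub, Real.mul_rpow (by positivity) (by positivity)]
  have hint := integral_norm_circleMap_le (F := F) hβ (by linarith : 1 / 2 ≤ r) (by linarith)
    fun x hx => hF x (by linarith) (by linarith)
  calc ‖c m‖
      ≤ ((2 * π)⁻¹ * ∫ θ : ℝ in 0..2 * π, ‖F (circleMap 0 r θ)‖) * r⁻¹ ^ m :=
        norm_coeff_le_of_hasSum hc (by linarith) (by linarith) m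
    _ ≤ ((2 * π)⁻¹ * (C * (1 + π) ^ β * (2 / (β - 1)) * (1 - r) ^ (1 - β))) * 2 := by
        have hint0 : 0 ≤ ∫ θ : ℝ in 0..2 * π, ‖F (circleMap 0 r θ)‖ :=
          intervalIntegral.integral_nonneg (by positivity) fun θ _ => norm_nonneg _
        have := hint0.trans hint
        have hr0 : 0 ≤ r := by linarith
        gcongr
        exact inv_one_sub_inv_pow_le_two m
    _ = _ := by rw [hgap]; ring

/-- The coefficient `λ_{j,k} / j!` of the expansion of `(s - 1) ^ k * ζ(s) ^ k` at `s = 1`, as a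
complex number. -/
noncomputable def zetaPowCoeff (k j : ℕ) : ℂ := iteratedDeriv j (zetaPowAux k) 1 / j.factorial

lemma hasSum_zetaPowCoeff (k : ℕ) (w : ℂ) :
    HasSum (fun j => zetaPowCoeff k j * w ^ j) (zetaPowAux k (1 + w)) := by
  convert! hasSum_taylorSeries_of_entire (differentiable_zetaPowAux k) 1 (1 + w) using 1
  ext j
  simp only [zetaPowCoeff, smul_eq_mul, add_sub_cancel_left]
  ring

lemma summable_norm_zetaPowCoeff_add_mul_pow (k N : ℕ) {ρ : ℝ} (hρ : 0 ≤ ρ) :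
    Summable fun i => ‖zetaPowCoeff k (i + N)‖ * ρ ^ i := by
  have hρ1 : ((ρ + 1 : ℝ) : ℂ) ≠ 0 := ofReal_ne_zero.2 (by linarith)
  refine .of_nonneg_of_le (fun i => by positivity) (fun i => ?_)
    (hasSum_nat_add_mul_pow (hasSum_zetaPowCoeff k _) hρ1 N).summable.norm
  rw [norm_mul, norm_pow, Complex.norm_of_nonneg (by linarith)]
  gcongr
  linarith

lemma mul_tsum_zetaPowCoeff (k : ℕ) {w : ℂ} (hw : w ≠ 0) :
    w * ∑' i, zetaPowCoeff k (i + (k + 1)) * w ^ i =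
      riemannZeta (1 + w) ^ k - ∑ i ∈ range (k + 1), zetaPowCoeff k i * w⁻¹ ^ (k - i) := by
  have hpolar : ∑ i ∈ range (k + 1), zetaPowCoeff k i * w⁻¹ ^ (k - i) =
      (∑ i ∈ range (k + 1), zetaPowCoeff k i * w ^ i) / w ^ k := by
    rw [sum_div]
    refine sum_congr rfl fun i hi => ?_
    rw [inv_pow, pow_sub₀ _ hw (mem_range_succ_iff.1 hi)]
    field_simp
  rw [(hasSum_nat_add_mul_pow (hasSum_zetaPowCoeff k w) hw (k + 1)).tsum_eq, hpolar, zetaPowAux,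
    Function.update_of_ne (by simpa using hw), add_sub_cancel_left, mul_pow]
  field_simp
  ring

lemma exists_norm_mul_tsum_zetaPowCoeff_le (k : ℕ) {δ : ℝ} (hδ : 0 < δ) :
    ∃ A, 0 ≤ A ∧ ∀ w : ℂ, δ ≤ ‖w‖ →
      ‖w * ∑' i, zetaPowCoeff k (i + (k + 1)) * w ^ i‖ ≤ ‖riemannZeta (1 + w)‖ ^ k + A := by
  refine ⟨∑ i ∈ range (k + 1), ‖zetaPowCoeff k i‖ * δ⁻¹ ^ (k - i), by positivity, fun w hw => ?_⟩
  rw [mul_tsum_zetaPowCoeff k (norm_pos_iff.1 (hδ.trans_le hw)), ← norm_pow]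
  refine norm_sub_le_of_le le_rfl (norm_sum_le_of_le _ fun i _ => ?_)
  rw [norm_mul, norm_pow, norm_inv]
  gcongr

/-- The generating function `∑ n ≥ 1, (-1) ^ n * ℓ_{n,k} * x ^ (n - 1)` on the unit disc, in the
form given by the Euler transform. -/
noncomputable def ellGenerating (k : ℕ) (x : ℂ) : ℂ :=
  (1 - x)⁻¹ * ∑' i, zetaPowCoeff k (i + (k + 1)) * (x / (1 - x)) ^ i

lemma hasSum_ellGenerating (k : ℕ) {x : ℂ} (hx : ‖x‖ < 1) :
    HasSum (fun m : ℕ => (∑ i ∈ range (m + 1), (m.choose i : ℂ) * zetaPowCoeff k (i + (k + 1))) *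
      x ^ m) (ellGenerating k x) :=
  hasSum_sum_choose_mul_pow hx <| summable_norm_zetaPowCoeff_add_mul_pow k (k + 1) <|
    div_nonneg (norm_nonneg x) (by linarith)

lemma ell_natCast_add_one_s11 (k m : ℕ) : ell k (m + 1 : ℕ) = (-1) ^ (m + 1) *
    (∑ i ∈ range (m + 1), (m.choose i : ℂ) * zetaPowCoeff k (i + (k + 1))).re := by
  rw [ell, if_pos (by lia), Int.toNat_natCast, ← Ico_add_one_right_eq_Icc, sum_Ico_eq_sum_range,
    Nat.add_sub_cancel, Nat.add_sub_cancel, re_sum]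
  congr 1
  refine sum_congr rfl fun i _ => ?_
  rw [Nat.add_sub_cancel_left, show 1 + i + k = i + (k + 1) by lia, zetaPowCoeff, lam,
    ← ofReal_natCast, re_ofReal_mul, div_natCast_re, mul_div_assoc]

lemma abs_ell_natCast_add_one_le (k m : ℕ) : |ell k (m + 1 : ℕ)| ≤
    ‖∑ i ∈ range (m + 1), (m.choose i : ℂ) * zetaPowCoeff k (i + (k + 1))‖ := by
  rw [ell_natCast_add_one_s11, abs_mul, abs_pow, abs_neg, abs_one, one_pow, one_mul]
  exact abs_re_le_norm _

lemma one_sub_ne_zero_of_norm_lt_one {x : ℂ} (hx : ‖x‖ < 1) : 1 - x ≠ 0 :=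
  sub_ne_zero.2 fun h => by simp [← h] at hx

lemma half_le_re_inv_one_sub {x : ℂ} (hx : ‖x‖ < 1) : 1 / 2 ≤ ((1 - x)⁻¹).re := by
  have hx2 : normSq x < 1 := by
    rw [normSq_eq_norm_sq]
    nlinarith [norm_nonneg x]
  rw [inv_re, div_le_div_iff₀ two_pos (normSq_pos.2 (one_sub_ne_zero_of_norm_lt_one hx))]
  rw [normSq_apply] at hx2 ⊢
  simp only [sub_re, one_re, sub_im, one_im]
  nlinarith

lemma rpow_le_two_rpow_mul_rpow {t a b : ℝ} (ht : 1 / 2 ≤ t) (hab : a ≤ b) :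
    t ^ a ≤ 2 ^ (b - a) * t ^ b := by
  have ht0 : 0 < t := by linarith
  calc t ^ a ≤ (2 * t) ^ (b - a) * t ^ a :=
        le_mul_of_one_le_left (by positivity) (Real.one_le_rpow (by linarith) (by linarith))
    _ = 2 ^ (b - a) * t ^ b := by
        rw [Real.mul_rpow zero_le_two ht0.le, mul_assoc, ← Real.rpow_add ht0, sub_add_cancel]

lemma inv_one_sub_eq_one_add {x : ℂ} (hx : ‖x‖ < 1) : (1 - x)⁻¹ = 1 + x / (1 - x) := by
  have hne := one_sub_ne_zero_of_norm_lt_one hx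
  field_simp
  ring

lemma quarter_le_norm_div_one_sub {x : ℂ} (hx : 1 / 2 ≤ ‖x‖) (hx1 : ‖x‖ < 1) :
    1 / 4 ≤ ‖x / (1 - x)‖ := by
  have hle : ‖1 - x‖ ≤ 2 := (norm_sub_le _ _).trans (by rw [norm_one]; linarith)
  rw [norm_div, le_div_iff₀ (norm_pos_iff.2 (one_sub_ne_zero_of_norm_lt_one hx1))]
  linarith

lemma ellGenerating_eq_inv_mul (k : ℕ) {x : ℂ} (hx : x ≠ 0) : ellGenerating k x =
    x⁻¹ * (x / (1 - x) * ∑' i, zetaPowCoeff k (i + (k + 1)) * (x / (1 - x)) ^ i) := by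
  rw [ellGenerating, ← mul_assoc, div_eq_mul_inv x, inv_mul_cancel_left₀ hx]

lemma exists_norm_ellGenerating_le {k : ℕ} {C α β : ℝ} (hβ : 0 ≤ β) (hαβ : k * α ≤ β)
    (hζ : ∀ s : ℂ, 1 / 2 ≤ s.re → 1 / 4 ≤ ‖s - 1‖ → ‖riemannZeta s‖ ≤ C * ‖s‖ ^ α) :
    ∃ B, ∀ x : ℂ, 1 / 2 ≤ ‖x‖ → ‖x‖ < 1 → ‖ellGenerating k x‖ ≤ B * ‖1 - x‖ ^ (-β) := by
  obtain ⟨A, hA0, hA⟩ := exists_norm_mul_tsum_zetaPowCoeff_le k (δ := 1 / 4) (by norm_num)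
  refine ⟨2 * (|C| ^ k * 2 ^ (β - k * α) + A * 2 ^ β), fun x hx hx1 => ?_⟩
  have hs := inv_one_sub_eq_one_add hx1
  have hw := quarter_le_norm_div_one_sub hx hx1
  have hgen := ellGenerating_eq_inv_mul k (norm_pos_iff.1 (by linarith : 0 < ‖x‖))
  set w := x / (1 - x)
  have hre : 1 / 2 ≤ (1 + w).re := hs ▸ half_le_re_inv_one_sub hx1
  have hsnorm : 1 / 2 ≤ ‖1 + w‖ := hre.trans (re_le_norm _)
  have hzeta : ‖riemannZeta (1 + w)‖ ≤ |C| * ‖1 + w‖ ^ α :=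
    (hζ _ hre (by simpa using hw)).trans (by gcongr; exact le_abs_self C)
  have hzetapow : ‖riemannZeta (1 + w)‖ ^ k ≤ |C| ^ k * (2 ^ (β - k * α) * ‖1 + w‖ ^ β) := calc
    ‖riemannZeta (1 + w)‖ ^ k ≤ (|C| * ‖1 + w‖ ^ α) ^ k := by gcongr
    _ = |C| ^ k * ‖1 + w‖ ^ (k * α) := by
        rw [mul_pow, mul_comm (k : ℝ), Real.rpow_mul_natCast (norm_nonneg _)]
    _ ≤ |C| ^ k * (2 ^ (β - k * α) * ‖1 + w‖ ^ β) := by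
        gcongr
        exact rpow_le_two_rpow_mul_rpow hsnorm hαβ
  have hone : 1 ≤ 2 ^ β * ‖1 + w‖ ^ β := by simpa using rpow_le_two_rpow_mul_rpow hsnorm hβ
  have hxinv : ‖x⁻¹‖ ≤ 2 := by
    rw [norm_inv, inv_le_comm₀ (by linarith) two_pos]
    linarith
  rw [Real.rpow_neg (norm_nonneg _), ← Real.inv_rpow (norm_nonneg _), ← norm_inv, hs, hgen,
    norm_mul]
  calc ‖x⁻¹‖ * ‖w * ∑' i, zetaPowCoeff k (i + (k + 1)) * w ^ i‖
      ≤ 2 * (|C| ^ k * (2 ^ (β - k * α) * ‖1 + w‖ ^ β) + A * (2 ^ β * ‖1 + w‖ ^ β)) := by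
        gcongr
        exact (hA w hw).trans (add_le_add hzetapow (le_mul_of_one_le_right hA0 hone))
    _ = _ := by ring

theorem exists_abs_ell_le {k : ℕ} {C α β : ℝ} (hβ : 1 < β) (hαβ : k * α ≤ β)
    (hζ : ∀ s : ℂ, 1 / 2 ≤ s.re → 1 / 4 ≤ ‖s - 1‖ → ‖riemannZeta s‖ ≤ C * ‖s‖ ^ α) :
    ∃ K, ∀ n : ℕ, 1 ≤ n → |ell k n| ≤ K * (n : ℝ) ^ (β - 1) := by
  obtain ⟨B, hB⟩ := exists_norm_ellGenerating_le (by linarith) hαβ hζ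
  obtain ⟨K, hK⟩ := exists_norm_coeff_le_rpow hβ (fun x hx => hasSum_ellGenerating k hx) hB
  refine ⟨K, fun n hn => ?_⟩
  obtain ⟨m, rfl⟩ := Nat.exists_eq_add_of_le' hn
  exact (abs_ell_natCast_add_one_le k m).trans (by exact_mod_cast hK m)

theorem stmt11_general (k : ℕ) {ε : ℝ} (hε : 0 ≤ ε) (hkε : 0 < ((k : ℝ) - 2) / 2 + ε) :
    ∃ C : ℝ, ∀ n : ℕ, 1 ≤ n → |ell k n| ≤ C * (n : ℝ) ^ (((k : ℝ) - 2) / 2 + ε) := by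
  obtain ⟨C, hC⟩ := exists_norm_riemannZeta_le (σ := 1 / 2) (δ := 1 / 4) (by norm_num)
    (by norm_num) (by norm_num)
  simpa using exists_abs_ell_le (k := k) (β := ((k : ℝ) - 2) / 2 + ε + 1) (by linarith)
    (by linarith) hC

theorem stmt11 (k : ℕ) (hk : 2 ≤ k) (ε : ℝ) (hε : 0 < ε) :
    ∃ C : ℝ, ∀ n : ℕ, 1 ≤ n → |ell k n| ≤ C * (n : ℝ) ^ (((k : ℝ) - 2) / 2 + ε) := by
  have hk' : (2 : ℝ) ≤ k := by exact_mod_cast hk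
  exact stmt11_general k hε.le (by linarith)
end
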